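/- arXiv:1405.1575 — 6 statements merged into one kernel-verified Lean document; each statement's English description precedes it below -/
import Mathlib

section
/- Every nonzero matrix of V3(F2) has rank exactly 2 (in particular every matrix of V3(F2) is singular). -/
/-!
Write `a = (M 0 1, M 1 2, M 2 0)` and `b = (M 2 1, M 1 0, M 0 2)`; membership in `V3` says that the
diagonal vanishes and that `a` and `b` each have coordinate sum `0`. Over `F2` a triple with sum `0`
is either zero or consists of two ones and one zero.

Since the diagonal vanishes, `det M` is the sum of the products of the coordinates of `a` and of
`b`, and both products are `0`, so the rank is at most `2`. If `M ≠ 0`, then two coordinates of `a`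
or two coordinates of `b` equal `1`, and their product is a `2 × 2` minor of `M` (the
other term of that minor contains a diagonal entry), so the rank is at least `2`.
-/

open Matrix

/-- `V3(F2)`: the `3 × 3` matrices over `F2` with zero diagonal satisfying
`M 0 1 + M 1 2 + M 2 0 = 0` and `M 2 1 + M 1 0 + M 0 2 = 0`. -/
def V3 : Submodule (ZMod 2) (Matrix (Fin 3) (Fin 3) (ZMod 2)) where
  carrier := {M | (∀ i : Fin 3, M i i = 0) ∧
    M 0 1 + M 1 2 + M 2 0 = 0 ∧ M 2 1 + M 1 0 + M 0 2 = 0}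
  add_mem' := by
    rintro M N ⟨hM1, hM2, hM3⟩ ⟨hN1, hN2, hN3⟩
    refine ⟨fun i => by simp [Matrix.add_apply, hM1 i, hN1 i], ?_, ?_⟩
    · simp only [Matrix.add_apply]
      linear_combination hM2 + hN2
    · simp only [Matrix.add_apply]
      linear_combination hM3 + hN3
  zero_mem' := by
    refine ⟨fun i => rfl, ?_, ?_⟩ <;> simp
  smul_mem' := by
    rintro c M ⟨hM1, hM2, hM3⟩
    refine ⟨fun i => by simp [Matrix.smul_apply, hM1 i], ?_, ?_⟩
    · simp only [Matrix.smul_apply, smul_eq_mul]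
      linear_combination c * hM2
    · simp only [Matrix.smul_apply, smul_eq_mul]
      linear_combination c * hM3

lemma F2_triple_prod : ∀ x y z : ZMod 2, x + y + z = 0 → x * y * z = 0 := by
  decide

lemma F2_triple_ne_zero : ∀ x y z : ZMod 2, x + y + z = 0 → ¬(x = 0 ∧ y = 0 ∧ z = 0) →
    x * y ≠ 0 ∨ y * z ≠ 0 ∨ z * x ≠ 0 := by
  decide

lemma V3_det_eq_zero {M : Matrix (Fin 3) (Fin 3) (ZMod 2)} (hM : M ∈ V3) : M.det = 0 := by
  obtain ⟨hd, ha, hb⟩ := hM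
  rw [Matrix.det_fin_three, hd 0, hd 1, hd 2]
  linear_combination F2_triple_prod _ _ _ ha + F2_triple_prod _ _ _ hb

lemma rank_lt_card_of_det_eq_zero {K : Type*} [Field K] {n : ℕ} {M : Matrix (Fin n) (Fin n) K}
    (h : M.det = 0) : M.rank < n := by
  refine lt_of_le_of_ne M.rank_le_width fun hr => ?_
  have htop : LinearMap.range M.mulVecLin = ⊤ :=
    Submodule.eq_top_of_finrank_eq (by rw [Module.finrank_fin_fun]; exact hr)
  have hu : IsUnit M := Matrix.mulVec_surjective_iff_isUnit.mp (LinearMap.range_eq_top.mp htop)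
  exact ((Matrix.isUnit_iff_isUnit_det M).mp hu).ne_zero h

/-- A nonzero `2 × 2` minor with a vanishing entry `M j j` bounds the rank below: the rows are
`i, j`, the columns `j, k`, and the minor equals `M i j * M j k`. -/
lemma two_le_rank_of_mul_ne_zero {K : Type*} [Field K] {n : ℕ} {M : Matrix (Fin n) (Fin n) K}
    (i j k : Fin n) (hj : M j j = 0) (h : M i j * M j k ≠ 0) : 2 ≤ M.rank := by
  have hdet : (M.submatrix ![i, j] ![j, k]).det ≠ 0 := by
    rw [Matrix.det_fin_two]
    simpa [hj] using h
  have hr := Matrix.rank_of_det_ne_zero hdet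
  rw [Fintype.card_fin] at hr
  exact hr.ge.trans (M.rank_submatrix_le _ _)

lemma V3_two_le_rank {M : Matrix (Fin 3) (Fin 3) (ZMod 2)} (hM : M ∈ V3) (h0 : M ≠ 0) :
    2 ≤ M.rank := by
  obtain ⟨hd, ha, hb⟩ := hM
  by_cases hza : M 0 1 = 0 ∧ M 1 2 = 0 ∧ M 2 0 = 0
  · by_cases hzb : M 2 1 = 0 ∧ M 1 0 = 0 ∧ M 0 2 = 0
    · refine absurd ?_ h0
      ext i j
      fin_cases i <;> fin_cases j <;> simp [hd, hza, hzb]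
    · rcases F2_triple_ne_zero _ _ _ hb hzb with h | h | h
      · exact two_le_rank_of_mul_ne_zero 2 1 0 (hd 1) h
      · exact two_le_rank_of_mul_ne_zero 1 0 2 (hd 0) h
      · exact two_le_rank_of_mul_ne_zero 0 2 1 (hd 2) h
  · rcases F2_triple_ne_zero _ _ _ ha hza with h | h | h
    · exact two_le_rank_of_mul_ne_zero 0 1 2 (hd 1) h
    · exact two_le_rank_of_mul_ne_zero 1 2 0 (hd 2) h
    · exact two_le_rank_of_mul_ne_zero 2 0 1 (hd 0) h

theorem every_nonzero_matrix_of_V3_has_rank_two :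
    (∀ M ∈ V3, M ≠ 0 → M.rank = 2) ∧ ∀ M ∈ V3, M.det = 0 := by
  refine ⟨fun M hM h0 => ?_, fun M hM => V3_det_eq_zero hM⟩
  exact le_antisymm (Nat.lt_succ_iff.mp (rank_lt_card_of_det_eq_zero (V3_det_eq_zero hM)))
    (V3_two_le_rank hM h0)
end

section
/- For every nonzero vector x in F2^3, the linear subspace {M x : M ∈ U3(F2)} of F2^3 has dimension exactly 2. -/
/-!
For fixed `x = (p, q, r)`, the product `M x` is linear in the parameters `(a, b, c)` of `M ∈ U3`,
with coefficient matrix having columns `(q + r, p, p)`, `(0, r, p)`, `(r, 0, q)`. Its determinant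
`q r (q + r) + p r (p + r)` vanishes identically on `F2`, so the image is never all of `F2 ^ 3`,
while for `x ≠ 0` two of the vectors `M x` are always linearly independent. Both facts concern
finitely many vectors and are checked by evaluation in `exists_basis_U3_mulVec`, which provides
a basis of the image.
-/

open Matrix

/-- `U3(F2)`: the matrices `!![0, a, a+c; a, 0, b; a+b, c, 0]` with `a, b, c ∈ F2`. -/
def U3 : Submodule (ZMod 2) (Matrix (Fin 3) (Fin 3) (ZMod 2)) where
  carrier := {M | ∃ a b c : ZMod 2, M = !![0, a, a + c; a, 0, b; a + b, c, 0]}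
  add_mem' := by
    rintro M N ⟨a, b, c, rfl⟩ ⟨a', b', c', rfl⟩
    exact ⟨a + a', b + b', c + c', by revert a b c a' b' c'; decide⟩
  zero_mem' := ⟨0, 0, 0, by decide⟩
  smul_mem' := by
    rintro k M ⟨a, b, c, rfl⟩
    exact ⟨k * a, k * b, k * c, by revert k a b c; decide⟩

/-- For nonzero `x` there are linearly independent `u`, `v` of the form `M x`, `M ∈ U3`, such that
every `M x` is a combination of `u` and `v`. The parameters of the matrices giving `u` and `v` are
quantified, rather than `u` and `v` themselves. -/
lemma exists_basis_U3_mulVec : ∀ x : Fin 3 → ZMod 2, x ≠ 0 →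
    ∃ a b c a' b' c' : ZMod 2,
      (∀ s t : ZMod 2,
        s • (!![0, a, a + c; a, 0, b; a + b, c, 0]).mulVec x +
          t • (!![0, a', a' + c'; a', 0, b'; a' + b', c', 0]).mulVec x = 0 → s = 0 ∧ t = 0) ∧
      ∀ d e f : ZMod 2, ∃ s t : ZMod 2,
        s • (!![0, a, a + c; a, 0, b; a + b, c, 0]).mulVec x +
          t • (!![0, a', a' + c'; a', 0, b'; a' + b', c', 0]).mulVec x =
        (!![0, d, d + f; d, 0, e; d + e, f, 0]).mulVec x := by
  decide +kernel

theorem dim_U3_mulVec_eq_two (x : Fin 3 → ZMod 2) (hx : x ≠ 0) :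
    Module.finrank (ZMod 2)
      (Submodule.span (ZMod 2) {y : Fin 3 → ZMod 2 | ∃ M ∈ U3, M.mulVec x = y}) = 2 := by
  obtain ⟨a, b, c, a', b', c', hli, hspan⟩ := exists_basis_U3_mulVec x hx
  set u := (!![0, a, a + c; a, 0, b; a + b, c, 0]).mulVec x with hu
  set v := (!![0, a', a' + c'; a', 0, b'; a' + b', c', 0]).mulVec x with hv
  have hind : LinearIndependent (ZMod 2) ![u, v] := LinearIndependent.pair_iff.mpr hli
  have heq : Submodule.span (ZMod 2) {y : Fin 3 → ZMod 2 | ∃ M ∈ U3, M.mulVec x = y} =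
      Submodule.span (ZMod 2) (Set.range ![u, v]) := by
    rw [Matrix.range_cons_cons_empty]
    apply le_antisymm
    · rw [Submodule.span_le]
      rintro y ⟨M, ⟨d, e, f, rfl⟩, rfl⟩
      exact Submodule.mem_span_pair.mpr (hspan d e f)
    · apply Submodule.span_mono
      rintro y (rfl | rfl)
      · exact ⟨_, ⟨a, b, c, rfl⟩, rfl⟩
      · exact ⟨_, ⟨a', b', c', rfl⟩, rfl⟩
  rw [heq, finrank_span_eq_card hind, Fintype.card_fin]
end

section
/- The spaces U3(F2) and V3(F2) are primitive linear subspaces of the 3×3 matrices over F2 with upper rank 2, and every nonzero matrix of U3(F2) and every nonzero matrix of V3(F2) has rank 2. -/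
/-!
`U3` is contained in `V3`, so everything is proved for a space `V` with `U3 ≤ V ≤ V3`.

*Rank.* The determinant of a matrix of `V3` is `xyz + uvw` with `x + y + z = u + v + w = 0`,
and such products vanish over `F2`. Conversely a matrix `M` has rank at least `2` as soon as its
kernel meets some plane `ker φ` trivially, and such a `φ` exists for each nonzero `M` in `V3`.

*Primitivity.* If `Q` is invertible and `φ` is the last row of `Q⁻¹`, the first two columns of `Q`
span the plane `ker φ`. Deleting the last column of `P * M * Q` hence amounts to restricting `M` to
`ker φ`, and the resulting rank is `2` whenever the kernel of `M` meets `ker φ` trivially. The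
kernels of the matrices of `U3` are numerous enough that each plane is avoided by one of them
(`separates_U3`), and the same holds for the transposes (`separates_U3_transpose`), which settles
the deletion of the last row.
-/

open Matrix

/-- Two linear subspaces of `n × p` matrices over `K` are *equivalent* when one is obtained
from the other by multiplying on the left and on the right by fixed invertible matrices. -/
def MatEquiv (K : Type*) [Field K] {n p : ℕ}
    (V₁ V₂ : Submodule K (Matrix (Fin n) (Fin p) K)) : Prop :=
  ∃ (P : Matrix (Fin n) (Fin n) K) (Q : Matrix (Fin p) (Fin p) K),
    IsUnit P ∧ IsUnit Q ∧
      (V₂ : Set (Matrix (Fin n) (Fin p) K)) =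
        (fun M => P * M * Q) '' (V₁ : Set (Matrix (Fin n) (Fin p) K))

/-- A linear subspace of matrices is *reduced* when no nonzero vector is annihilated by every
matrix of the space, and the column spaces of the matrices of the space together span the
whole target space. -/
def Reduced (K : Type*) [Field K] {n p : ℕ}
    (V : Submodule K (Matrix (Fin n) (Fin p) K)) : Prop :=
  (∀ x : Fin p → K, (∀ M ∈ V, M.mulVec x = 0) → x = 0) ∧
  Submodule.span K {y : Fin n → K | ∃ M ∈ V, ∃ x : Fin p → K, M.mulVec x = y} = ⊤

/-- The *upper rank* of a linear subspace of matrices: the maximal rank of a matrix in it. -/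
noncomputable def urk {K : Type*} [Field K] {n p : ℕ}
    (V : Submodule K (Matrix (Fin n) (Fin p) K)) : ℕ :=
  sSup (Matrix.rank '' (V : Set (Matrix (Fin n) (Fin p) K)))

/-- The matrix obtained by deleting the last column. -/
def dropCol {K : Type*} [Field K] {n p : ℕ} (M : Matrix (Fin n) (Fin p) K) :
    Matrix (Fin n) (Fin (p - 1)) K :=
  M.submatrix id (Fin.castLE (Nat.sub_le p 1))

/-- The matrix obtained by deleting the last row. -/
def dropRow {K : Type*} [Field K] {n p : ℕ} (M : Matrix (Fin n) (Fin p) K) :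
    Matrix (Fin (n - 1)) (Fin p) K :=
  M.submatrix (Fin.castLE (Nat.sub_le n 1)) id

/-- A linear subspace of matrices (of upper rank `r = urk V`) is *semi-primitive* when it is
reduced and it is not equivalent to a subspace `T` such that the space obtained by deleting
the last column of each matrix of `T` has upper rank at most `r - 1`. -/
def SemiPrimitive (K : Type*) [Field K] {n p : ℕ}
    (V : Submodule K (Matrix (Fin n) (Fin p) K)) : Prop :=
  Reduced K V ∧
    ¬ ∃ T : Submodule K (Matrix (Fin n) (Fin p) K),
        MatEquiv K V T ∧ ∀ M ∈ T, (dropCol M).rank ≤ urk V - 1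

/-- A linear subspace of matrices (of upper rank `r = urk V`) is *primitive* when it is
semi-primitive and it is not equivalent to a subspace `T` such that the space obtained by
deleting the last row of each matrix of `T` has upper rank at most `r - 1`. -/
def Primitive (K : Type*) [Field K] {n p : ℕ}
    (V : Submodule K (Matrix (Fin n) (Fin p) K)) : Prop :=
  SemiPrimitive K V ∧
    ¬ ∃ T : Submodule K (Matrix (Fin n) (Fin p) K),
        MatEquiv K V T ∧ ∀ M ∈ T, (dropRow M).rank ≤ urk V - 1

/-- The kernel of `M` meets the hyperplane `φ = 0` trivially. -/
def Avoids {K : Type*} [Field K] (M : Matrix (Fin 3) (Fin 3) K) (φ : Fin 3 → K) : Prop :=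
  ∀ y : Fin 3 → K, M *ᵥ y = 0 → φ ⬝ᵥ y = 0 → y = 0

instance (M : Matrix (Fin 3) (Fin 3) (ZMod 2)) (φ : Fin 3 → ZMod 2) : Decidable (Avoids M φ) := by
  unfold Avoids; infer_instance

theorem two_le_rank_of_avoids {K : Type*} [Field K] {M : Matrix (Fin 3) (Fin 3) K}
    {φ : Fin 3 → K} (h : Avoids M φ) : 2 ≤ M.rank := by
  have hinj : Function.Injective
      ((dotProductBilin K K φ).comp (LinearMap.ker M.mulVecLin).subtype) := by
    rw [← LinearMap.ker_eq_bot, LinearMap.ker_eq_bot']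
    rintro ⟨y, hy⟩ hφ
    exact Subtype.ext (h y (by simpa using hy) (by simpa using hφ))
  have h1 := LinearMap.finrank_le_finrank_of_injective hinj
  have h2 := M.mulVecLin.finrank_range_add_finrank_ker
  simp only [Module.finrank_self, Module.finrank_fin_fun] at h1 h2
  unfold Matrix.rank
  lia

/-- Deleting the last column of `P * M * Q` keeps rank `2` when the kernel of `M` avoids the
plane spanned by the first two columns of `Q`. -/
theorem one_lt_rank_dropCol {K : Type*} [Field K] {P M Q : Matrix (Fin 3) (Fin 3) K}
    (hP : IsUnit P) (hQ : IsUnit Q) (h : Avoids M (Q⁻¹ 2)) :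
    1 < (dropCol (P * M * Q)).rank := by
  have hinj : Function.Injective (dropCol (P * M * Q)).mulVecLin := by
    rw [← LinearMap.ker_eq_bot, LinearMap.ker_eq_bot']
    intro z hz
    set z' : Fin 3 → K := ![z 0, z 1, 0] with hz'
    have hz1 : (P * M * Q) *ᵥ z' = 0 := by
      rw [← hz]
      ext i
      simp [dropCol, Matrix.mulVec, dotProduct, Fin.sum_univ_succ, hz']
    have hQd := (Matrix.isUnit_iff_isUnit_det Q).1 hQ
    have hback : Q⁻¹ *ᵥ (Q *ᵥ z') = z' := by
      rw [Matrix.mulVec_mulVec, Matrix.nonsing_inv_mul Q hQd, Matrix.one_mulVec]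
    have hPz : P *ᵥ (M *ᵥ (Q *ᵥ z')) = P *ᵥ 0 := by
      rw [Matrix.mulVec_mulVec, Matrix.mulVec_mulVec, hz1, Matrix.mulVec_zero]
    have h0 := h (Q *ᵥ z') (Matrix.mulVec_injective_of_isUnit hP hPz) (congrFun hback 2)
    rw [h0, Matrix.mulVec_zero] at hback
    ext i
    fin_cases i
    · exact (congrFun hback 0).symm
    · exact (congrFun hback 1).symm
  have := LinearMap.finrank_range_of_inj hinj
  unfold Matrix.rank
  rw [this]
  simp

theorem dropRow_eq_transpose {K : Type*} [Field K] (M : Matrix (Fin 3) (Fin 3) K) :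
    dropRow M = (dropCol Mᵀ)ᵀ := rfl

theorem row_ne_zero {K : Type*} [Field K] {Q : Matrix (Fin 3) (Fin 3) K} (hQ : IsUnit Q)
    (i : Fin 3) : Q i ≠ 0 := fun h =>
  ((Matrix.isUnit_iff_isUnit_det Q).1 hQ).ne_zero
    (Matrix.det_eq_zero_of_row_eq_zero i fun j => congrFun h j)

theorem separates_U3 (φ : Fin 3 → ZMod 2) (hφ : φ ≠ 0) : ∃ M ∈ U3, Avoids M φ := by
  have key : ∀ φ : Fin 3 → ZMod 2, φ ≠ 0 → ∃ a b c : ZMod 2,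
      Avoids !![0, a, a + c; a, 0, b; a + b, c, 0] φ := by decide +kernel
  obtain ⟨a, b, c, h⟩ := key φ hφ
  exact ⟨_, ⟨a, b, c, rfl⟩, h⟩

theorem separates_U3_transpose (φ : Fin 3 → ZMod 2) (hφ : φ ≠ 0) :
    ∃ M ∈ U3, Avoids Mᵀ φ := by
  have key : ∀ φ : Fin 3 → ZMod 2, φ ≠ 0 → ∃ a b c : ZMod 2,
      Avoids (!![0, a, a + c; a, 0, b; a + b, c, 0]ᵀ) φ := by decide +kernel
  obtain ⟨a, b, c, h⟩ := key φ hφ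
  exact ⟨_, ⟨a, b, c, rfl⟩, h⟩

theorem U3_le_V3 : U3 ≤ V3 := by
  rintro _ ⟨a, b, c, rfl⟩
  change _ ∧ _ ∧ _
  revert a b c
  decide

theorem reduced_U3 : Reduced (ZMod 2) U3 := by
  constructor
  · have key : ∀ x : Fin 3 → ZMod 2,
        (∀ a b c : ZMod 2, !![0, a, a + c; a, 0, b; a + b, c, 0] *ᵥ x = 0) → x = 0 := by
      decide +kernel
    exact fun x hx => key x fun a b c => hx _ ⟨a, b, c, rfl⟩
  · have key : ∀ i : Fin 3, ∃ a b c : ZMod 2, ∃ x : Fin 3 → ZMod 2,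
        !![0, a, a + c; a, 0, b; a + b, c, 0] *ᵥ x = Pi.single i 1 := by
      decide +kernel
    rw [eq_top_iff, ← (Pi.basisFun (ZMod 2) (Fin 3)).span_eq]
    refine Submodule.span_mono ?_
    rintro _ ⟨i, rfl⟩
    obtain ⟨a, b, c, x, h⟩ := key i
    exact ⟨_, ⟨a, b, c, rfl⟩, x, by simpa using h⟩

theorem Reduced.mono {K : Type*} [Field K] {n p : ℕ}
    {V W : Submodule K (Matrix (Fin n) (Fin p) K)} (hV : Reduced K V) (h : V ≤ W) :
    Reduced K W := by
  refine ⟨fun x hx => hV.1 x fun M hM => hx M (h hM), ?_⟩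
  rw [eq_top_iff, ← hV.2]
  refine Submodule.span_mono ?_
  rintro y ⟨M, hM, hy⟩
  exact ⟨M, h hM, hy⟩

theorem rank_of_mem_V3 {M : Matrix (Fin 3) (Fin 3) (ZMod 2)} (hM : M ∈ V3) (h0 : M ≠ 0) :
    M.rank = 2 := by
  have key : ∀ a b c d : ZMod 2, !![0, a, c + d; d, 0, b; a + b, c, 0] ≠ 0 →
      (!![0, a, c + d; d, 0, b; a + b, c, 0]).det = 0 ∧
      ∃ φ, Avoids !![0, a, c + d; d, 0, b; a + b, c, 0] φ := by
    simp only [Matrix.det_fin_three]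
    decide +kernel
  obtain ⟨hd, h1, h2⟩ := hM
  have hMeq : M = !![0, M 0 1, M 2 1 + M 1 0; M 1 0, 0, M 1 2; M 0 1 + M 1 2, M 2 1, 0] := by
    -- in characteristic two, `x + y = 0` means `x = y`
    rw [CharTwo.add_eq_zero] at h1 h2
    ext i j
    fin_cases i <;> fin_cases j <;> simp [hd, h1, h2]
  have hk := key (M 0 1) (M 1 2) (M 2 1) (M 1 0)
  rw [← hMeq] at hk
  obtain ⟨hdet, φ, hφ⟩ := hk h0
  have hlt : M.rank ≠ 3 := by
    intro h
    have hsurj : Function.Surjective M.mulVecLin :=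
      LinearMap.range_eq_top.1 (Submodule.eq_top_of_finrank_eq (h.trans (by simp)))
    have hunit := Matrix.mulVec_surjective_iff_isUnit.1 hsurj
    rw [Matrix.isUnit_iff_isUnit_det, hdet] at hunit
    exact not_isUnit_zero hunit
  have := M.rank_le_width
  have := two_le_rank_of_avoids hφ
  lia

theorem primitive_of_between {V : Submodule (ZMod 2) (Matrix (Fin 3) (Fin 3) (ZMod 2))}
    (hU : U3 ≤ V) (hV : V ≤ V3) : Primitive (ZMod 2) V ∧ urk V = 2 := by
  have hurk : urk V = 2 := by
    refine IsGreatest.csSup_eq ⟨?_, ?_⟩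
    · obtain ⟨M, hM, h⟩ := separates_U3 (Pi.single 0 1) (by simp)
      refine ⟨M, hU hM, rank_of_mem_V3 (U3_le_V3 hM) ?_⟩
      rintro rfl
      simpa using two_le_rank_of_avoids h
    · rintro _ ⟨M, hM, rfl⟩
      by_cases h0 : M = 0
      · simp [h0]
      · exact (rank_of_mem_V3 (hV hM) h0).le
  refine ⟨⟨⟨reduced_U3.mono hU, ?_⟩, ?_⟩, hurk⟩
  · rintro ⟨T, ⟨P, Q, hP, hQ, hT⟩, h⟩
    obtain ⟨M, hM, hMφ⟩ :=
      separates_U3 (Q⁻¹ 2) (row_ne_zero ((Matrix.isUnit_nonsing_inv_iff).2 hQ) 2)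
    have hmem : P * M * Q ∈ (T : Set _) := hT ▸ ⟨M, hU hM, rfl⟩
    have h1 := h _ hmem
    have h2 := one_lt_rank_dropCol hP hQ hMφ
    lia
  · rintro ⟨T, ⟨P, Q, hP, hQ, hT⟩, h⟩
    have hPt : IsUnit Pᵀ := (Matrix.isUnit_transpose P).2 hP
    have hQt : IsUnit Qᵀ := (Matrix.isUnit_transpose Q).2 hQ
    obtain ⟨M, hM, hMφ⟩ :=
      separates_U3_transpose (Pᵀ⁻¹ 2) (row_ne_zero ((Matrix.isUnit_nonsing_inv_iff).2 hPt) 2)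
    have hmem : P * M * Q ∈ (T : Set _) := hT ▸ ⟨M, hU hM, rfl⟩
    have h1 := h _ hmem
    have h2 := one_lt_rank_dropCol hQt hPt hMφ
    rw [dropRow_eq_transpose, Matrix.rank_transpose, Matrix.transpose_mul, Matrix.transpose_mul,
      ← Matrix.mul_assoc] at h1
    lia

theorem U3_and_V3_are_primitive_with_upper_rank_two :
    (Primitive (ZMod 2) U3 ∧ urk U3 = 2) ∧
    (Primitive (ZMod 2) V3 ∧ urk V3 = 2) ∧
    (∀ M ∈ U3, M ≠ 0 → M.rank = 2) ∧ (∀ M ∈ V3, M ≠ 0 → M.rank = 2) :=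
  ⟨primitive_of_between le_rfl U3_le_V3, primitive_of_between U3_le_V3 le_rfl,
    fun _ hM => rank_of_mem_V3 (U3_le_V3 hM), fun _ hM => rank_of_mem_V3 hM⟩
end

section
/- The space J3(F2) is a primitive linear subspace of the 3×3 matrices over F2 with upper rank 2. -/
/-!
Every matrix of `J3` is upper triangular with diagonal `(a, b, a + b)`, and
`a * b * (a + b) = 0` over `F2`, so every matrix of `J3` is singular;
and `diag (1, 1, 0)` is a matrix of rank `2` in `J3`.

Primitivity rests on the following fact: every nonzero vector of `F2 ^ 3` spans the kernel of some
rank-`2` matrix of `J3` (`exists_mem_J3_mulVec`), and likewise for left kernels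
(`exists_mem_J3_vecMul`). Given invertible `P` and `Q`, choose such an `M` killing the last column
of `Q`. Then `P * M * Q` has rank `2` and zero last column, so deleting that column leaves the
rank equal to `2`. For rows, choose `M` killed on the left by the last row of `P`.
-/

open Matrix

/-- `J3(F2)`: the space of upper-triangular `3 × 3` matrices over `F2` with trace zero. -/
def J3 : Submodule (ZMod 2) (Matrix (Fin 3) (Fin 3) (ZMod 2)) where
  carrier := {M | M.trace = 0 ∧ ∀ i j : Fin 3, j < i → M i j = 0}
  add_mem' := by
    rintro M N ⟨hM1, hM2⟩ ⟨hN1, hN2⟩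
    refine ⟨by simp [Matrix.trace_add, hM1, hN1], ?_⟩
    intro i j h
    simp [Matrix.add_apply, hM2 i j h, hN2 i j h]
  zero_mem' := by
    refine ⟨by simp, ?_⟩
    intro i j h
    simp
  smul_mem' := by
    rintro c M ⟨hM1, hM2⟩
    refine ⟨by simp [Matrix.trace_smul, hM1], ?_⟩
    intro i j h
    simp [Matrix.smul_apply, hM2 i j h]

/-- Explicit form of membership in `J3`. -/
lemma mem_J3_of (a b x y z : ZMod 2) : !![a, x, y; 0, b, z; 0, 0, a + b] ∈ J3 := by
  refine ⟨?_, ?_⟩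
  · revert a b x y z
    decide
  · intro i j h
    fin_cases i <;> fin_cases j <;> simp at h ⊢

lemma two_le_rank_of_submatrix_eq_one {M : Matrix (Fin 3) (Fin 3) (ZMod 2)}
    (r c : Fin 2 → Fin 3) (h : M.submatrix r c = 1) : 2 ≤ M.rank := by
  have h1 := M.rank_submatrix_le r c
  rw [h, Matrix.rank_one] at h1
  simpa using h1

lemma rank_le_two_of_mem_J3 {M : Matrix (Fin 3) (Fin 3) (ZMod 2)} (hM : M ∈ J3) :
    M.rank ≤ 2 := by
  obtain ⟨htr, hlow⟩ := hM
  have hdet : M.det = 0 := by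
    have key : ∀ a b c : ZMod 2, a + b + c = 0 → a * b * c = 0 := by decide
    rw [Matrix.trace_fin_three] at htr
    rw [Matrix.det_fin_three, hlow 1 0 (by decide), hlow 2 0 (by decide), hlow 2 1 (by decide)]
    simpa using key _ _ _ htr
  obtain ⟨v, hv, hMv⟩ := Matrix.exists_mulVec_eq_zero_iff.mpr hdet
  have hker : 0 < Module.finrank (ZMod 2) (LinearMap.ker M.mulVecLin) := by
    rw [Module.finrank_pos_iff_exists_ne_zero]
    exact ⟨⟨v, by simpa using hMv⟩, fun h => hv (congrArg Subtype.val h)⟩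
  have hsum := LinearMap.finrank_range_add_finrank_ker M.mulVecLin
  rw [Module.finrank_fin_fun] at hsum
  change Module.finrank (ZMod 2) (LinearMap.range M.mulVecLin) ≤ 2
  omega

lemma zmod_two_cases (a : ZMod 2) : a = 0 ∨ a = 1 := by
  revert a
  decide

/-- Every nonzero vector is in the kernel of a matrix of `J3` of rank at least `2`. The diagonal
of the matrix vanishes at the index of the last nonzero entry of the vector. -/
lemma exists_mem_J3_mulVec (w : Fin 3 → ZMod 2) (hw : w ≠ 0) :
    ∃ M ∈ J3, M *ᵥ w = 0 ∧ 2 ≤ M.rank := by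
  obtain ⟨p, q, s, rfl⟩ : ∃ p q s, w = ![p, q, s] :=
    ⟨w 0, w 1, w 2, by ext i; fin_cases i <;> rfl⟩
  rcases zmod_two_cases s with rfl | rfl
  · rcases zmod_two_cases q with rfl | rfl
    · rcases zmod_two_cases p with rfl | rfl
      · exact absurd (by decide) hw
      · exact ⟨_, mem_J3_of 0 1 0 0 0, by decide,
          two_le_rank_of_submatrix_eq_one ![1, 2] ![1, 2] (by decide)⟩
    · exact ⟨_, mem_J3_of 1 0 p 0 0, by revert p; decide,
        two_le_rank_of_submatrix_eq_one ![0, 2] ![0, 2] (by revert p; decide)⟩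
  · exact ⟨_, mem_J3_of 1 1 0 p q, by revert p q; decide,
      two_le_rank_of_submatrix_eq_one ![0, 1] ![0, 1] (by revert p q; decide)⟩

/-- Every nonzero row vector is in the left kernel of a matrix of `J3` of rank at least `2`. The
diagonal of the matrix vanishes at the index of the first nonzero entry of the vector. -/
lemma exists_mem_J3_vecMul (u : Fin 3 → ZMod 2) (hu : u ≠ 0) :
    ∃ M ∈ J3, u ᵥ* M = 0 ∧ 2 ≤ M.rank := by
  obtain ⟨p, q, s, rfl⟩ : ∃ p q s, u = ![p, q, s] :=
    ⟨u 0, u 1, u 2, by ext i; fin_cases i <;> rfl⟩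
  rcases zmod_two_cases p with rfl | rfl
  · rcases zmod_two_cases q with rfl | rfl
    · rcases zmod_two_cases s with rfl | rfl
      · exact absurd (by decide) hu
      · exact ⟨_, mem_J3_of 1 1 0 0 0, by decide,
          two_le_rank_of_submatrix_eq_one ![0, 1] ![0, 1] (by decide)⟩
    · exact ⟨_, mem_J3_of 1 0 0 0 s, by revert s; decide,
        two_le_rank_of_submatrix_eq_one ![0, 2] ![0, 2] (by revert s; decide)⟩
  · exact ⟨_, mem_J3_of 0 1 q s 0, by revert q s; decide,
      two_le_rank_of_submatrix_eq_one ![1, 2] ![1, 2] (by revert q s; decide)⟩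

lemma rank_le_rank_dropCol {N : Matrix (Fin 3) (Fin 3) (ZMod 2)} (h : ∀ i, N i 2 = 0) :
    N.rank ≤ (dropCol N).rank := by
  have hN : N = dropCol N * (!![1, 0, 0; 0, 1, 0] : Matrix (Fin 2) (Fin 3) (ZMod 2)) := by
    ext i j
    rw [Matrix.mul_apply]
    erw [Fin.sum_univ_two]
    fin_cases j
    · simp [dropCol]
    · simp [dropCol]
    · simp [h]
  calc N.rank = _ := congrArg Matrix.rank hN
    _ ≤ _ := Matrix.rank_mul_le_left _ _

lemma rank_le_rank_dropRow {N : Matrix (Fin 3) (Fin 3) (ZMod 2)} (h : ∀ j, N 2 j = 0) :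
    N.rank ≤ (dropRow N).rank := by
  have hN : N = (!![1, 0; 0, 1; 0, 0] : Matrix (Fin 3) (Fin 2) (ZMod 2)) * dropRow N := by
    ext i j
    rw [Matrix.mul_apply]
    erw [Fin.sum_univ_two]
    fin_cases i
    · simp [dropRow]
    · simp [dropRow]
    · simp [h]
  calc N.rank = _ := congrArg Matrix.rank hN
    _ ≤ _ := Matrix.rank_mul_le_right _ _

lemma urk_J3 : urk J3 = 2 := by
  refine IsGreatest.csSup_eq ⟨⟨_, mem_J3_of 1 1 0 0 0, ?_⟩, ?_⟩
  · exact le_antisymm (rank_le_two_of_mem_J3 (mem_J3_of 1 1 0 0 0))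
      (two_le_rank_of_submatrix_eq_one ![0, 1] ![0, 1] (by decide))
  · rintro _ ⟨M, hM, rfl⟩
    exact rank_le_two_of_mem_J3 hM

lemma reduced_J3 : Reduced (ZMod 2) J3 := by
  refine ⟨?_, ?_⟩
  · intro x hx
    have h1 := hx _ (mem_J3_of 1 1 0 0 0)
    have h2 := hx _ (mem_J3_of 0 1 0 0 0)
    clear hx
    revert x
    decide
  · rw [eq_top_iff]
    rintro y -
    -- `diag (1, 1, 0)` produces the first two coordinates of `y`, `diag (0, 1, 1)` the third.
    have hy : y = !![1, 0, 0; 0, 1, 0; 0, 0, 1 + 1] *ᵥ y +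
        !![0, 0, 0; 0, 1, 0; 0, 0, 0 + 1] *ᵥ ![0, 0, y 2] := by
      revert y
      decide
    rw [hy]
    exact add_mem (Submodule.subset_span ⟨_, mem_J3_of 1 1 0 0 0, _, rfl⟩)
      (Submodule.subset_span ⟨_, mem_J3_of 0 1 0 0 0, _, rfl⟩)

lemma rank_mul_mul_of_isUnit {P M Q : Matrix (Fin 3) (Fin 3) (ZMod 2)} (hP : IsUnit P)
    (hQ : IsUnit Q) : (P * M * Q).rank = M.rank := by
  rw [Matrix.rank_mul_eq_left_of_isUnit_det _ _ ((Matrix.isUnit_iff_isUnit_det Q).mp hQ),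
    Matrix.rank_mul_eq_right_of_isUnit_det _ _ ((Matrix.isUnit_iff_isUnit_det P).mp hP)]

theorem J3_is_primitive_with_upper_rank_two :
    Primitive (ZMod 2) J3 ∧ urk J3 = 2 := by
  refine ⟨⟨⟨reduced_J3, ?_⟩, ?_⟩, urk_J3⟩
  · rintro ⟨T, ⟨P, Q, hP, hQ, hT⟩, hrank⟩
    have hw : Q *ᵥ Pi.single 2 1 ≠ 0 := by
      intro h
      have h0 := Matrix.mulVec_injective_of_isUnit hQ (h.trans (Matrix.mulVec_zero Q).symm)
      simpa using congrFun h0 2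
    obtain ⟨M, hM, hMw, hM2⟩ := exists_mem_J3_mulVec _ hw
    have hmem : P * M * Q ∈ T := by
      rw [← SetLike.mem_coe, hT]
      exact ⟨M, hM, rfl⟩
    have hcol : ∀ i, (P * M * Q) i 2 = 0 := by
      intro i
      have h : (P * M * Q) *ᵥ Pi.single 2 1 = 0 := by
        rw [← Matrix.mulVec_mulVec, ← Matrix.mulVec_mulVec, hMw, Matrix.mulVec_zero]
      rw [Matrix.mulVec_single_one] at h
      exact congrFun h i
    have h1 := hrank _ hmem
    have h2 := rank_le_rank_dropCol hcol
    rw [rank_mul_mul_of_isUnit hP hQ] at h2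
    rw [urk_J3] at h1
    omega
  · rintro ⟨T, ⟨P, Q, hP, hQ, hT⟩, hrank⟩
    have hu : Pi.single 2 1 ᵥ* P ≠ 0 := by
      intro h
      have h0 := Matrix.vecMul_injective_of_isUnit hP (h.trans (Matrix.zero_vecMul P).symm)
      simpa using congrFun h0 2
    obtain ⟨M, hM, huM, hM2⟩ := exists_mem_J3_vecMul _ hu
    have hmem : P * M * Q ∈ T := by
      rw [← SetLike.mem_coe, hT]
      exact ⟨M, hM, rfl⟩
    have hrow : ∀ j, (P * M * Q) 2 j = 0 := by
      intro j
      have h : Pi.single 2 1 ᵥ* (P * M * Q) = 0 := by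
        rw [← Matrix.vecMul_vecMul, ← Matrix.vecMul_vecMul, huM, Matrix.zero_vecMul]
      rw [Matrix.single_one_vecMul] at h
      exact congrFun h j
    have h1 := hrank _ hmem
    have h2 := rank_le_rank_dropRow hrow
    rw [rank_mul_mul_of_isUnit hP hQ] at h2
    rw [urk_J3] at h1
    omega
end

section
/- Let K be a field, and n ≥ 2, p ≥ 2. For every reduced linear subspace V of R(1,1) ⊂ (n×p matrices over K), there is a unique integer r with 0 ≤ r ≤ min(n−1, p−1) such that V is equivalent to one and only one of the following two spaces: the space of all matrices of the block form [[a, X^T, L], [X, 0, 0], [C, 0, 0]] with a ∈ K, X ∈ K^r, C ∈ K^{n−r−1}, L a 1×(p−r−1) row over K (the zero blocks having sizes r×r, r×(p−r−1), (n−r−1)×r, (n−r−1)×(p−r−1)); and the space of all such matrices with a = 0. -/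
/-!
A matrix of `R(1,1)` is a triple `(a, L, C)`: its corner entry, the rest of its first row and the
rest of its first column. Reducedness of `V` says that the entries of `L` are linearly independent
functionals on `V`, and likewise the entries of `C`. Let `r` be the dimension of the intersection
of the spans of these two families in the dual of `V`. A basis of this intersection extends to a
basis of each span (`exists_adapted_bases`), and the two changes of basis are column and row
operations (`exists_operations`). After them the first `r` entries of `L` and `C` agree, and the
remaining functionals are independent, hence take arbitrary values (`exists_eval_eq`). If `a` is
not in the sum of the two spans, it is independent of the other entries and the result is the full
block space; if it is, it can be cleared by row and column operations and the result is the block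
space with `a = 0`. This is `exists_normal_form`.

For uniqueness, consider the span of the matrices of rank at most one in `V` (`rankOneSpan`). Its
dimension and that of `V` are invariant under equivalence (`MatEquiv.finrank_eq`). In either normal
form a matrix has rank at most one only if `X = 0`, and the matrices with `X = 0` are sums of two
matrices of rank at most one in the space, so this span has codimension `r`
(`finrank_normal_form`). Hence `V` determines `r`, and the dimension of `V` then tells the two
normal forms apart (`finrank_BlockSpace0_lt`).
-/

open Matrix

/-- `R(s, t)`: the space of `n × p` matrices whose `(i, j)` entry vanishes whenever `i ≥ s`
and `j ≥ t` (rows and columns being indexed from `0`). -/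
def Rst (K : Type*) [Field K] (n p s t : ℕ) : Submodule K (Matrix (Fin n) (Fin p) K) where
  carrier := {M | ∀ (i : Fin n) (j : Fin p), s ≤ (i : ℕ) → t ≤ (j : ℕ) → M i j = 0}
  add_mem' := by
    intro M N hM hN i j hi hj
    simp [Matrix.add_apply, hM i j hi hj, hN i j hi hj]
  zero_mem' := fun i j _ _ => rfl
  smul_mem' := by
    intro c M hM i j hi hj
    simp [Matrix.smul_apply, hM i j hi hj]

/-- The space of `n × p` matrices of the block form `[[a, Xᵀ, L], [X, 0, 0], [C, 0, 0]]`,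
where `a` is a scalar, `X ∈ K^r` occupies rows `1, …, r` of column `0` and columns
`1, …, r` of row `0`, and `L`, `C` are arbitrary. -/
def BlockSpace (K : Type*) [Field K] (n p r : ℕ) (hn : 0 < n) (hp : 0 < p) :
    Submodule K (Matrix (Fin n) (Fin p) K) where
  carrier := {M |
    (∀ (i : Fin n) (j : Fin p), 1 ≤ (i : ℕ) → 1 ≤ (j : ℕ) → M i j = 0) ∧
    ∀ (i : Fin n) (j : Fin p), (i : ℕ) = (j : ℕ) → 1 ≤ (i : ℕ) → (i : ℕ) ≤ r →
      M i ⟨0, hp⟩ = M ⟨0, hn⟩ j}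
  add_mem' := by
    rintro M N ⟨hM1, hM2⟩ ⟨hN1, hN2⟩
    refine ⟨fun i j hi hj => by simp [Matrix.add_apply, hM1 i j hi hj, hN1 i j hi hj],
      fun i j hij hi hir => by simp [Matrix.add_apply, hM2 i j hij hi hir, hN2 i j hij hi hir]⟩
  zero_mem' := ⟨fun i j _ _ => rfl, fun i j _ _ _ => rfl⟩
  smul_mem' := by
    rintro c M ⟨hM1, hM2⟩
    refine ⟨fun i j hi hj => by simp [Matrix.smul_apply, hM1 i j hi hj],
      fun i j hij hi hir => by simp [Matrix.smul_apply, hM2 i j hij hi hir]⟩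

/-- As `BlockSpace`, with the extra requirement that the `(0,0)` entry vanishes. -/
def BlockSpace0 (K : Type*) [Field K] (n p r : ℕ) (hn : 0 < n) (hp : 0 < p) :
    Submodule K (Matrix (Fin n) (Fin p) K) where
  carrier := {M | M ∈ BlockSpace K n p r hn hp ∧ M ⟨0, hn⟩ ⟨0, hp⟩ = 0}
  add_mem' := by
    rintro M N ⟨hM1, hM2⟩ ⟨hN1, hN2⟩
    exact ⟨(BlockSpace K n p r hn hp).add_mem hM1 hN1, by simp [Matrix.add_apply, hM2, hN2]⟩
  zero_mem' := ⟨(BlockSpace K n p r hn hp).zero_mem, rfl⟩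
  smul_mem' := by
    rintro c M ⟨hM1, hM2⟩
    exact ⟨(BlockSpace K n p r hn hp).smul_mem c hM1, by simp [Matrix.smul_apply, hM2]⟩

/-! ### The invariants of a space under equivalence -/

/-- The span of the matrices of rank at most one lying in `V`; such a matrix is written as an
outer product `u vᵀ`. -/
def rankOneSpan {K : Type*} [Field K] {n p : ℕ} (V : Submodule K (Matrix (Fin n) (Fin p) K)) :
    Submodule K (Matrix (Fin n) (Fin p) K) :=
  Submodule.span K {M | M ∈ V ∧ ∃ u v, M = Matrix.vecMulVec u v}

/-- The linear map `M ↦ P * M * Q`. -/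
def mulBoth {K : Type*} [Field K] {n p : ℕ} (P : Matrix (Fin n) (Fin n) K)
    (Q : Matrix (Fin p) (Fin p) K) :
    Matrix (Fin n) (Fin p) K →ₗ[K] Matrix (Fin n) (Fin p) K where
  toFun M := P * M * Q
  map_add' M N := by rw [Matrix.mul_add, Matrix.add_mul]
  map_smul' c M := by simp

lemma MatEquiv.finrank_eq {K : Type*} [Field K] {n p : ℕ}
    {V W : Submodule K (Matrix (Fin n) (Fin p) K)} (h : MatEquiv K V W) :
    Module.finrank K V = Module.finrank K W ∧
      Module.finrank K (rankOneSpan V) = Module.finrank K (rankOneSpan W) := by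
  obtain ⟨P, Q, hP, hQ, h⟩ := h
  obtain ⟨P, rfl⟩ := hP
  obtain ⟨Q, rfl⟩ := hQ
  have hinv : ∀ M : Matrix (Fin n) (Fin p) K,
      (↑P⁻¹ : Matrix (Fin n) (Fin n) K) * ((P : Matrix (Fin n) (Fin n) K) * M * (Q : Matrix (Fin p) (Fin p) K)) * (↑Q⁻¹ : Matrix (Fin p) (Fin p) K) = M := by
    intro M
    have h1 : (↑P⁻¹ : Matrix (Fin n) (Fin n) K) * P = 1 := P.inv_mul
    have h2 : (Q : Matrix (Fin p) (Fin p) K) * (↑Q⁻¹ : Matrix (Fin p) (Fin p) K) = 1 := Q.mul_inv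
    rw [Matrix.mul_assoc (P : Matrix (Fin n) (Fin n) K), ← Matrix.mul_assoc, h1, Matrix.one_mul,
      Matrix.mul_assoc, h2, Matrix.mul_one]
  have hinj : Function.Injective (mulBoth P.1 Q.1) :=
    Function.LeftInverse.injective
      (g := fun N => (↑P⁻¹ : Matrix (Fin n) (Fin n) K) * N * (↑Q⁻¹ : Matrix (Fin p) (Fin p) K)) hinv
  have hW : W = V.map (mulBoth P.1 Q.1) := SetLike.coe_injective h
  have hS : rankOneSpan W = (rankOneSpan V).map (mulBoth P.1 Q.1) := by
    rw [rankOneSpan, rankOneSpan, Submodule.map_span]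
    congr 1
    ext N
    constructor
    · rintro ⟨hN, u, v, huv⟩
      rw [hW] at hN
      obtain ⟨M, hM, rfl⟩ := hN
      refine ⟨M, ⟨hM, (↑P⁻¹ : Matrix (Fin n) (Fin n) K) *ᵥ u,
        v ᵥ* (↑Q⁻¹ : Matrix (Fin p) (Fin p) K), ?_⟩, rfl⟩
      rw [← Matrix.vecMulVec_mul, ← Matrix.mul_vecMulVec, ← huv]
      exact (hinv M).symm
    · rintro ⟨M, ⟨hM, u, v, rfl⟩, rfl⟩
      refine ⟨hW ▸ Submodule.mem_map_of_mem hM, (P : Matrix (Fin n) (Fin n) K) *ᵥ u,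
        v ᵥ* (Q : Matrix (Fin p) (Fin p) K), ?_⟩
      rw [← Matrix.vecMulVec_mul, ← Matrix.mul_vecMulVec]
      rfl
  constructor
  · rw [hW]; exact (Submodule.equivMapOfInjective _ hinj V).finrank_eq
  · rw [hS]; exact (Submodule.equivMapOfInjective _ hinj _).finrank_eq

/-- In both normal forms, the matrices of rank at most one span the matrices with `X = 0`, so the
codimension of their span is `r`. -/
lemma finrank_normal_form {K : Type*} [Field K] {n p r : ℕ} (hn : 0 < n) (hp : 0 < p)
    (hrn : r + 1 ≤ n) (hrp : r + 1 ≤ p) (W : Submodule K (Matrix (Fin n) (Fin p) K))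
    (hW : W = BlockSpace K n p r hn hp ∨ W = BlockSpace0 K n p r hn hp) :
    r + Module.finrank K (rankOneSpan W) = Module.finrank K W := by
  have hle : ∀ M ∈ W, M ∈ BlockSpace K n p r hn hp := by
    rcases hW with rfl | rfl
    · exact fun M h => h
    · exact fun M h => h.1
  have hmem : ∀ M, M ∈ BlockSpace K n p r hn hp → M ⟨0, hn⟩ ⟨0, hp⟩ = 0 → M ∈ W := by
    rcases hW with rfl | rfl
    · exact fun M h _ => h
    · exact fun M h h' => ⟨h, h'⟩
  have hmem' : ∀ M ∈ W, ∀ N, N ∈ BlockSpace K n p r hn hp →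
      N ⟨0, hn⟩ ⟨0, hp⟩ = M ⟨0, hn⟩ ⟨0, hp⟩ → N ∈ W := by
    rcases hW with rfl | rfl
    · exact fun _ _ N h _ => h
    · exact fun M hM N h h' => ⟨h, h'.trans hM.2⟩
  let f : Matrix (Fin n) (Fin p) K →ₗ[K] (Fin r → K) :=
    LinearMap.pi fun j => Matrix.entryLinearMap K K ⟨0, hn⟩ ⟨j + 1, by omega⟩
  have hf : ∀ M j, f M j = M ⟨0, hn⟩ ⟨j + 1, by omega⟩ := fun M j => rfl
  have hsurj : (f.domRestrict W).range = ⊤ := by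
    rw [LinearMap.range_eq_top]
    intro x
    refine ⟨⟨Matrix.of fun i j =>
      if h : (i : ℕ) = 0 ∧ 1 ≤ (j : ℕ) ∧ (j : ℕ) ≤ r then x ⟨j - 1, by omega⟩
      else if h : (j : ℕ) = 0 ∧ 1 ≤ (i : ℕ) ∧ (i : ℕ) ≤ r then x ⟨i - 1, by omega⟩ else 0, ?_⟩, ?_⟩
    · refine hmem _ ⟨?_, ?_⟩ ?_
      · intro i j hi hj
        have h1 : (i : ℕ) ≠ 0 := by omega
        have h2 : (j : ℕ) ≠ 0 := by omega
        simp [h1, h2]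
      · intro i j hij hi hir
        have h3 : (j : ℕ) ≤ r := by omega
        have h4 : 1 ≤ (j : ℕ) := by omega
        simp [h3, h4, hij]
      · simp
    · ext j
      rw [LinearMap.domRestrict_apply, hf]
      have := j.2
      simp [this]
  have hker : (f.domRestrict W).ker.map W.subtype = rankOneSpan W := by
    apply le_antisymm
    · rintro _ ⟨⟨M, hM⟩, hk, rfl⟩
      have hk' : f M = 0 := hk
      obtain ⟨h1, h2⟩ := hle M hM
      have h0 : ∀ j : Fin p, 1 ≤ (j : ℕ) → (j : ℕ) ≤ r → M ⟨0, hn⟩ j = 0 := by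
        intro j hj hjr
        have := congrFun hk' ⟨j - 1, by omega⟩
        rw [hf] at this
        have hj' : (⟨(j : ℕ) - 1 + 1, by omega⟩ : Fin p) = j := Fin.ext (by simp; omega)
        simpa only [hj', Pi.zero_apply] using this
      -- split off the first row; what remains is supported in the first column
      have hsplit : M = Matrix.vecMulVec (fun i : Fin n => if (i : ℕ) = 0 then 1 else 0) (M ⟨0, hn⟩)
          + Matrix.vecMulVec (fun i : Fin n => if (i : ℕ) = 0 then 0 else M i ⟨0, hp⟩)
            (fun j : Fin p => if (j : ℕ) = 0 then 1 else 0) := by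
        ext i j
        simp only [Matrix.add_apply, Matrix.vecMulVec_apply]
        by_cases hi : (i : ℕ) = 0
        · have : i = ⟨0, hn⟩ := Fin.ext hi
          subst this; simp
        · by_cases hj : (j : ℕ) = 0
          · have : j = ⟨0, hp⟩ := Fin.ext hj
            subst this; simp [hi]
          · simp [hi, hj, h1 i j (by omega) (by omega)]
      change M ∈ _
      rw [hsplit]
      refine Submodule.add_mem _ (Submodule.subset_span ⟨?_, _, _, rfl⟩)
        (Submodule.subset_span ⟨?_, _, _, rfl⟩)
      · refine hmem' M hM _ ⟨?_, ?_⟩ ?_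
        · intro i j hi hj
          have : (i : ℕ) ≠ 0 := by omega
          simp [Matrix.vecMulVec_apply, this]
        · intro i j hij hi hir
          have : (i : ℕ) ≠ 0 := by omega
          simp [Matrix.vecMulVec_apply, this, h0 j (by omega) (by omega)]
        · simp [Matrix.vecMulVec_apply]
      · refine hmem _ ⟨?_, ?_⟩ ?_
        · intro i j hi hj
          have : (j : ℕ) ≠ 0 := by omega
          simp [Matrix.vecMulVec_apply, this]
        · intro i j hij hi hir
          have : (i : ℕ) ≠ 0 := by omega
          simp [Matrix.vecMulVec_apply, this, h2 i j hij hi hir, h0 j (by omega) (by omega)]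
        · simp [Matrix.vecMulVec_apply]
    · refine Submodule.span_le.2 ?_
      rintro M ⟨hM, u, v, huv⟩
      refine ⟨⟨M, hM⟩, ?_, rfl⟩
      change f M = 0
      ext j
      obtain ⟨h1, h2⟩ := hle M hM
      have e1 := h1 ⟨j + 1, by omega⟩ ⟨j + 1, by omega⟩ (by simp) (by simp)
      have e2 := h2 ⟨j + 1, by omega⟩ ⟨j + 1, by omega⟩ rfl (by simp) j.2
      rw [hf]
      simp only [huv, Matrix.vecMulVec_apply, Pi.zero_apply] at e1 e2 ⊢
      -- the `2 × 2` minor on rows and columns `0, j + 1` is minus the square of the entry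
      have : (u ⟨0, hn⟩ * v ⟨j + 1, by omega⟩) ^ 2 = 0 := by
        linear_combination (u ⟨0, hn⟩ * v ⟨0, hp⟩) * e1 - (u ⟨0, hn⟩ * v ⟨j + 1, by omega⟩) * e2
      exact pow_eq_zero_iff (two_ne_zero) |>.1 this
  have := (f.domRestrict W).finrank_range_add_finrank_ker
  rw [hsurj, finrank_top, Module.finrank_fin_fun, ← Submodule.finrank_map_subtype_eq, hker] at this
  exact this

lemma finrank_BlockSpace0_lt {K : Type*} [Field K] {n p r : ℕ} (hn : 0 < n) (hp : 0 < p) :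
    Module.finrank K (BlockSpace0 K n p r hn hp) < Module.finrank K (BlockSpace K n p r hn hp) := by
  refine Submodule.finrank_lt_finrank_of_lt (lt_of_le_of_ne (fun M h => h.1) fun h => ?_)
  have hE : Matrix.single ⟨0, hn⟩ ⟨0, hp⟩ (1 : K) ∈ BlockSpace K n p r hn hp := by
    refine ⟨fun i j hi hj => ?_, fun i j hij hi hir => ?_⟩
    · rw [Matrix.single_apply_of_row_ne]
      intro h; simp [← h] at hi
    · rw [Matrix.single_apply_of_row_ne, Matrix.single_apply_of_col_ne]
      · intro h; simp [← h] at hij; omega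
      · intro h; simp [← h] at hi
  rw [← h] at hE
  simpa using hE.2

/-! ### Linear algebra for the existence of a normal form -/

/-- Linearly independent functionals take arbitrary prescribed values. -/
lemma exists_eval_eq {K V ι : Type*} [Field K] [AddCommGroup V] [Module K V] [Fintype ι]
    {f : ι → Module.Dual K V} (hf : LinearIndependent K f) (c : ι → K) :
    ∃ v, ∀ i, f i v = c i := by
  classical
  suffices h : (LinearMap.pi f).range = ⊤ by
    obtain ⟨v, hv⟩ := LinearMap.range_eq_top.1 h c
    exact ⟨v, fun i => congrFun hv i⟩
  by_contra h
  obtain ⟨g, hg0, hg⟩ : ∃ g : (ι → K) →ₗ[K] K, g ≠ 0 ∧ (LinearMap.pi f).range ≤ g.ker :=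
    Submodule.exists_le_ker_of_lt_top _ (lt_top_iff_ne_top.2 h)
  have hsum : ∑ i, g (Pi.single i (1 : K)) • f i = 0 := by
    ext v
    have h1 : g (LinearMap.pi f v) = 0 := hg ⟨v, rfl⟩
    rw [pi_eq_sum_univ' (LinearMap.pi f v), map_sum] at h1
    simpa [mul_comm] using h1
  have h0 := Fintype.linearIndependent_iff.1 hf _ hsum
  apply hg0
  ext i
  simpa using h0 i

/-- A linear form of Goursat's lemma: for two injective maps into the same space, there are bases
of the sources whose first `r` images coincide, while the other images are as independent as
possible. The common images form a basis of the intersection of the two ranges. -/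
lemma exists_adapted_bases {K U W D : Type*} [Field K] [AddCommGroup U] [Module K U]
    [AddCommGroup W] [Module K W] [AddCommGroup D] [Module K D] [FiniteDimensional K U]
    [FiniteDimensional K W] (γ : U →ₗ[K] D) (l : W →ₗ[K] D) (hγ : Function.Injective γ)
    (hl : Function.Injective l) :
    ∃ (r s t : ℕ) (y : Module.Basis (Fin r ⊕ Fin t) K U) (z : Module.Basis (Fin r ⊕ Fin s) K W),
      (∀ i, γ (y (Sum.inl i)) = l (z (Sum.inl i))) ∧
      LinearIndependent K (Sum.elim (l ∘ z) (γ ∘ y ∘ Sum.inr)) := by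
  let I : Submodule K (U × W) := (γ ∘ₗ LinearMap.fst K U W - l ∘ₗ LinearMap.snd K U W).ker
  have hI : ∀ x, x ∈ I ↔ γ x.1 = l x.2 := fun x => by simp [I, sub_eq_zero]
  have h1 : Function.Injective (LinearMap.fst K U W ∘ₗ I.subtype) := by
    rw [← LinearMap.ker_eq_bot, LinearMap.ker_eq_bot']
    rintro ⟨⟨u, w⟩, hx⟩ h
    have hu : u = 0 := h
    have := (hI _).1 hx
    simp only [hu, map_zero] at this
    have hw : w = 0 := hl (by rw [← this, map_zero])
    simp [hu, hw]
  have h2 : Function.Injective (LinearMap.snd K U W ∘ₗ I.subtype) := by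
    rw [← LinearMap.ker_eq_bot, LinearMap.ker_eq_bot']
    rintro ⟨⟨u, w⟩, hx⟩ h
    have hw : w = 0 := h
    have := (hI _).1 hx
    simp only [hw, map_zero] at this
    have hu : u = 0 := hγ (by rw [this, map_zero])
    simp [hu, hw]
  obtain ⟨C, hC⟩ := Submodule.exists_isCompl (LinearMap.fst K U W ∘ₗ I.subtype).range
  obtain ⟨C', hC'⟩ := Submodule.exists_isCompl (LinearMap.snd K U W ∘ₗ I.subtype).range
  let b := Module.finBasis K I
  let y := ((b.map (LinearEquiv.ofInjective _ h1)).prod (Module.finBasis K C)).map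
    (Submodule.prodEquivOfIsCompl _ _ hC)
  let z := ((b.map (LinearEquiv.ofInjective _ h2)).prod (Module.finBasis K C')).map
    (Submodule.prodEquivOfIsCompl _ _ hC')
  have hy : ∀ i, y (Sum.inl i) = (b i).1.1 := fun i => by simp [y]
  have hyr : ∀ i, y (Sum.inr i) = (Module.finBasis K C i : U) := fun i => by simp [y]
  have hz : ∀ i, z (Sum.inl i) = (b i).1.2 := fun i => by simp [z]
  refine ⟨_, _, _, y, z, fun i => ?_, ?_⟩
  · rw [hy, hz]
    exact (hI _).1 (b i).2
  · refine LinearIndependent.sum_type (z.linearIndependent.map' l (LinearMap.ker_eq_bot.2 hl))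
      ((y.linearIndependent.comp _ Sum.inr_injective).map' γ (LinearMap.ker_eq_bot.2 hγ)) ?_
    have hA : Submodule.span K (Set.range (l ∘ z)) ≤ l.range := by
      rw [Submodule.span_le]; rintro _ ⟨i, rfl⟩; exact ⟨_, rfl⟩
    have hB : Submodule.span K (Set.range (γ ∘ y ∘ Sum.inr)) ≤ C.map γ := by
      rw [Submodule.span_le]; rintro _ ⟨i, rfl⟩
      exact ⟨_, by simp only [Function.comp_apply, hyr]; exact (Module.finBasis K C i).2, rfl⟩
    refine Disjoint.mono hA hB ?_
    rw [Submodule.disjoint_def]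
    rintro _ ⟨w, rfl⟩ ⟨u, hu, huw⟩
    have hu' : u ∈ (LinearMap.fst K U W ∘ₗ I.subtype).range := ⟨⟨(u, w), (hI _).2 huw⟩, rfl⟩
    have : u = 0 := (Submodule.disjoint_def.1 hC.disjoint) u hu' hu
    rw [← huw, this, map_zero]

/-! ### Existence of a normal form -/

/-- A square matrix whose first column is `(1, 0, …, 0)` and whose lower right block is
invertible is invertible. -/
lemma isUnit_of_first_col {K : Type*} [Field K] {m : ℕ} (A : Matrix (Fin (m + 1)) (Fin (m + 1)) K)
    (h00 : A 0 0 = 1) (h0 : ∀ i : Fin m, A i.succ 0 = 0)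
    (hA : IsUnit (A.submatrix Fin.succ Fin.succ)) : IsUnit A := by
  have hdet : A.det = (A.submatrix Fin.succ Fin.succ).det := by
    rw [Matrix.det_succ_column_zero, Fin.sum_univ_succ]
    simp [h00, h0]
  rw [Matrix.isUnit_iff_isUnit_det] at hA ⊢
  rwa [hdet]

/-- The effect on a matrix `(a, L, C)` of `R(1,1)` of the row and column operations used to reach
the normal form: they replace `L` by `L Zᵀ` and `C` by `Y C`, and add a linear combination of
the entries of `L` and `C` to `a`. The rows of `Y` and `Z` are the vectors `y i` and `z j`. -/
lemma exists_operations {K : Type*} [Field K] {n p : ℕ} (y : Fin n → Fin n → K)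
    (z : Fin p → Fin p → K) (hy : LinearIndependent K y) (hz : LinearIndependent K z)
    (u : Fin n → K) (v : Fin p → K) :
    ∃ (P : Matrix (Fin (n + 1)) (Fin (n + 1)) K) (Q : Matrix (Fin (p + 1)) (Fin (p + 1)) K),
      IsUnit P ∧ IsUnit Q ∧ ∀ M ∈ Rst K (n + 1) (p + 1) 1 1,
        (P * M * Q) 0 0 = M 0 0 + ∑ j, v j * M 0 j.succ + ∑ i, u i * M i.succ 0 ∧
        (∀ j, (P * M * Q) 0 j.succ = ∑ k, z j k * M 0 k.succ) ∧
        (∀ i, (P * M * Q) i.succ 0 = ∑ k, y i k * M k.succ 0) ∧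
        ∀ (i : Fin n) (j : Fin p), (P * M * Q) i.succ j.succ = 0 := by
  refine ⟨Matrix.of (Fin.cons (Fin.cons 1 u) fun i => Fin.cons 0 (y i)),
    (Matrix.of (Fin.cons (Fin.cons 1 v) fun i => Fin.cons 0 (z i)))ᵀ, ?_, ?_, ?_⟩
  · refine isUnit_of_first_col _ rfl (fun i => rfl) ?_
    exact Matrix.linearIndependent_rows_iff_isUnit.1 hy
  · refine (Matrix.isUnit_transpose _).2 (isUnit_of_first_col _ rfl (fun i => rfl) ?_)
    exact Matrix.linearIndependent_rows_iff_isUnit.1 hz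
  · intro M hM
    have hM' : ∀ i j, M (Fin.succ i) (Fin.succ j) = 0 := fun i j => hM _ _ (by simp) (by simp)
    refine ⟨?_, fun j => ?_, fun i => ?_, fun i j => ?_⟩ <;>
      simp [Matrix.mul_apply, Fin.sum_univ_succ, hM', mul_comm]
    ring

lemma exists_normal_form {K : Type*} [Field K] {n p : ℕ}
    (V : Submodule K (Matrix (Fin (n + 1)) (Fin (p + 1)) K))
    (hV : V ≤ Rst K (n + 1) (p + 1) 1 1) (hred : Reduced K V) :
    ∃ r, r ≤ n ∧ r ≤ p ∧
      (MatEquiv K V (BlockSpace K (n + 1) (p + 1) r n.succ_pos p.succ_pos) ∨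
        MatEquiv K V (BlockSpace0 K (n + 1) (p + 1) r n.succ_pos p.succ_pos)) := by
  have hV' : ∀ M ∈ V, ∀ i j, M (Fin.succ i) (Fin.succ j) = 0 :=
    fun M hM i j => hV hM _ _ (by simp) (by simp)
  -- linear combinations of the entries of the first row, resp. column, as functionals on `V`
  let l : (Fin p → K) →ₗ[K] Module.Dual K V :=
    LinearMap.mk₂ K (fun w M => ∑ j, w j * M.1 0 j.succ)
      (fun _ _ _ => by simp [add_mul, Finset.sum_add_distrib])
      (fun _ _ _ => by simp [Finset.mul_sum, mul_assoc])
      (fun _ _ _ => by simp [mul_add, Finset.sum_add_distrib])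
      (fun _ _ _ => by simp [Finset.mul_sum, mul_left_comm])
  let γ : (Fin n → K) →ₗ[K] Module.Dual K V :=
    LinearMap.mk₂ K (fun w M => ∑ i, w i * M.1 i.succ 0)
      (fun _ _ _ => by simp [add_mul, Finset.sum_add_distrib])
      (fun _ _ _ => by simp [Finset.mul_sum, mul_assoc])
      (fun _ _ _ => by simp [mul_add, Finset.sum_add_distrib])
      (fun _ _ _ => by simp [Finset.mul_sum, mul_left_comm])
  let a : Module.Dual K V := Matrix.entryLinearMap K K 0 0 ∘ₗ V.subtype
  have hl_apply : ∀ w M, l w M = ∑ j, w j * M.1 0 j.succ := fun _ _ => rfl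
  have hγ_apply : ∀ w M, γ w M = ∑ i, w i * M.1 i.succ 0 := fun _ _ => rfl
  have ha_apply : ∀ M, a M = M.1 0 0 := fun _ => rfl
  have hl : Function.Injective l := by
    rw [← LinearMap.ker_eq_bot, LinearMap.ker_eq_bot']
    intro w hw
    have := hred.1 (Fin.cons 0 w) (fun M hM => by
      ext i
      refine Fin.cases ?_ (fun i => ?_) i
      · have h := LinearMap.congr_fun hw ⟨M, hM⟩
        rw [hl_apply] at h
        simpa [Matrix.mulVec, dotProduct, Fin.sum_univ_succ, mul_comm] using h
      · simp [Matrix.mulVec, dotProduct, Fin.sum_univ_succ, hV' M hM])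
    ext j
    simpa using congrFun this j.succ
  have hγ : Function.Injective γ := by
    rw [← LinearMap.ker_eq_bot, LinearMap.ker_eq_bot']
    intro w hw
    let φ : (Fin (n + 1) → K) →ₗ[K] K := Fintype.linearCombination K (Fin.cons 0 w : Fin (n + 1) → K)
    have hφ : ∀ x, φ x = ∑ i : Fin n, x i.succ * w i := fun x => by
      simp [φ, Fintype.linearCombination_apply, Fin.sum_univ_succ]
    have hker : (⊤ : Submodule K (Fin (n + 1) → K)) ≤ φ.ker := by
      rw [← hred.2, Submodule.span_le]
      rintro _ ⟨M, hM, x, rfl⟩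
      have h := LinearMap.congr_fun hw ⟨M, hM⟩
      rw [hγ_apply] at h
      change φ _ = 0
      rw [hφ]
      have h' : ∀ i : Fin n, (M *ᵥ x) i.succ * w i = (w i * M i.succ 0) * x 0 := fun i => by
        simp [Matrix.mulVec, dotProduct, Fin.sum_univ_succ, hV' M hM]
        ring
      simp only [h', ← Finset.sum_mul]
      rw [h]
      simp
    ext i
    have h : φ (Pi.single i.succ 1) = 0 := hker trivial
    rw [hφ, Finset.sum_eq_single i] at h
    · simpa using h
    · intro k _ hk
      rw [Pi.single_eq_of_ne (by simpa using hk), zero_mul]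
    · simp
  obtain ⟨r, s, t, y, z, hyz, hind⟩ := exists_adapted_bases γ l hγ hl
  have hn : n = r + t := by
    have := Module.finrank_eq_card_basis y
    simpa using this
  have hp : p = r + s := by
    have := Module.finrank_eq_card_basis z
    simpa using this
  subst hn hp
  refine ⟨r, by omega, by omega, ?_⟩
  let y' : Fin (r + t) → Fin (r + t) → K := y ∘ finSumFinEquiv.symm
  let z' : Fin (r + s) → Fin (r + s) → K := z ∘ finSumFinEquiv.symm
  have hy' : LinearIndependent K y' := y.linearIndependent.comp _ finSumFinEquiv.symm.injective
  have hz' : LinearIndependent K z' := z.linearIndependent.comp _ finSumFinEquiv.symm.injective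
  have hyl : ∀ i : Fin r, γ (y' (Fin.castAdd t i)) = l (z' (Fin.castAdd s i)) := fun i => by
    simpa [y', z'] using hyz i
  -- the first `r` new functionals agree on row and column, which is the condition of the block space
  have hblock : ∀ (P : Matrix (Fin (r + t + 1)) (Fin (r + t + 1)) K)
        (Q : Matrix (Fin (r + s + 1)) (Fin (r + s + 1)) K), (∀ M ∈ V,
        (∀ j, (P * M * Q) 0 j.succ = ∑ k, z' j k * M 0 k.succ) ∧
        (∀ i, (P * M * Q) i.succ 0 = ∑ k, y' i k * M k.succ 0) ∧
        ∀ (i : Fin (r + t)) (j : Fin (r + s)), (P * M * Q) i.succ j.succ = 0) → ∀ M ∈ V,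
      P * M * Q ∈ BlockSpace K (r + t + 1) (r + s + 1) r (Nat.succ_pos _) (Nat.succ_pos _) := by
    intro P Q hPQ M hM
    obtain ⟨h1, h2, h3⟩ := hPQ M hM
    refine ⟨fun i j => ?_, fun i j => ?_⟩
    · refine Fin.cases (by simp) (fun i => ?_) i
      refine Fin.cases (by simp) (fun j => ?_) j
      exact fun _ _ => h3 i j
    · refine Fin.cases (by simp) (fun i => ?_) i
      refine Fin.cases (by simp) (fun j => ?_) j
      intro hij _ hir
      have hi : i = Fin.castAdd t ⟨i, by simpa using hir⟩ := rfl
      have hj : j = Fin.castAdd s ⟨i, by simpa using hir⟩ := Fin.ext (by simpa using hij.symm)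
      refine (h2 i).trans (Eq.trans ?_ (h1 j).symm)
      rw [← hl_apply _ ⟨M, hM⟩, ← hγ_apply _ ⟨M, hM⟩, hj]
      exact LinearMap.congr_fun (hyl ⟨i, by simpa using hir⟩) ⟨M, hM⟩
  -- to reach `N` in the block space, it suffices to match the corner and the independent functionals
  have hdet : ∀ (P : Matrix (Fin (r + t + 1)) (Fin (r + t + 1)) K)
        (Q : Matrix (Fin (r + s + 1)) (Fin (r + s + 1)) K) (M N), M ∈ V →
        (∀ j, (P * M * Q) 0 j.succ = ∑ k, z' j k * M 0 k.succ) →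
        (∀ i, (P * M * Q) i.succ 0 = ∑ k, y' i k * M k.succ 0) →
      P * M * Q ∈ BlockSpace K (r + t + 1) (r + s + 1) r (Nat.succ_pos _) (Nat.succ_pos _) →
      N ∈ BlockSpace K (r + t + 1) (r + s + 1) r (Nat.succ_pos _) (Nat.succ_pos _) →
      (P * M * Q) 0 0 = N 0 0 →
      (∀ j : Fin r ⊕ Fin s, (∑ k, z j k * M 0 k.succ) = N 0 (finSumFinEquiv j).succ) →
      (∀ i : Fin t, (∑ k, y (Sum.inr i) k * M k.succ 0) = N (Fin.natAdd r i).succ 0) →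
      P * M * Q = N := by
    intro P Q M N hM h1 h2 hB hN h0 hz hy
    have hrow : ∀ j, (P * M * Q) 0 (Fin.succ j) = N 0 (Fin.succ j) := fun j => by
      rw [h1 j]
      simpa [z'] using hz (finSumFinEquiv.symm j)
    ext i j
    refine Fin.cases ?_ (fun i => ?_) i
    · exact Fin.cases h0 hrow j
    · refine Fin.cases ?_ (fun j => ?_) j
      · refine Fin.addCases (fun i => ?_) (fun i => ?_) i
        · have e1 := hB.2 (Fin.castAdd t i).succ (Fin.castAdd s i).succ (by simp) (by simp)
            (by simp)
          have e2 := hN.2 (Fin.castAdd t i).succ (Fin.castAdd s i).succ (by simp) (by simp)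
            (by simp)
          exact e1.trans ((hrow _).trans e2.symm)
        · rw [h2]
          simpa [y'] using hy i
      · rw [hB.1 i.succ j.succ (by simp) (by simp), hN.1 i.succ j.succ (by simp) (by simp)]
  by_cases ha : a ∈ Submodule.span K (Set.range (Sum.elim (l ∘ z) (γ ∘ y ∘ Sum.inr)))
  · right
    -- the corner entry is a combination of the others, hence is cleared by row and column operations
    have ha' : a ∈ l.range ⊔ γ.range := by
      refine (Submodule.span_le.2 ?_) ha
      rintro _ ⟨i | i, rfl⟩
      · exact Submodule.mem_sup_left ⟨_, rfl⟩
      · exact Submodule.mem_sup_right ⟨_, rfl⟩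
    obtain ⟨_, ⟨v, rfl⟩, _, ⟨u, rfl⟩, huv⟩ := Submodule.mem_sup.1 ha'
    obtain ⟨P, Q, hP, hQ, hPQ⟩ := exists_operations y' z' hy' hz' (-u) (-v)
    have h00 : ∀ M ∈ V, (P * M * Q) 0 0 = 0 := fun M hM => by
      have := LinearMap.congr_fun huv ⟨M, hM⟩
      rw [LinearMap.add_apply, hl_apply, hγ_apply, ha_apply] at this
      rw [(hPQ M (hV hM)).1]
      simp only [Pi.neg_apply, neg_mul, Finset.sum_neg_distrib]
      linear_combination -this
    have hB := hblock P Q (fun M hM => (hPQ M (hV hM)).2)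
    refine ⟨P, Q, hP, hQ, Set.Subset.antisymm (fun N hN => ?_) ?_⟩
    · obtain ⟨⟨M, hM⟩, hMN⟩ := exists_eval_eq hind
        (Sum.elim (fun j => N 0 (finSumFinEquiv j).succ) fun i => N (Fin.natAdd r i).succ 0)
      refine ⟨M, hM, hdet P Q M N hM (hPQ M (hV hM)).2.1 (hPQ M (hV hM)).2.2.1 (hB M hM) hN.1
        ((h00 M hM).trans hN.2.symm) (fun j => hMN (Sum.inl j)) (fun i => hMN (Sum.inr i))⟩
    · rintro _ ⟨M, hM, rfl⟩
      exact ⟨hB M hM, h00 M hM⟩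
  · left
    -- the corner entry is a further independent functional, so it takes all values
    obtain ⟨P, Q, hP, hQ, hPQ⟩ := exists_operations y' z' hy' hz' 0 0
    have hB := hblock P Q (fun M hM => (hPQ M (hV hM)).2)
    refine ⟨P, Q, hP, hQ, Set.Subset.antisymm (fun N hN => ?_) ?_⟩
    · obtain ⟨⟨M, hM⟩, hMN⟩ := exists_eval_eq (hind.option ha)
        (fun o => o.casesOn' (N 0 0) (Sum.elim (fun j => N 0 (finSumFinEquiv j).succ)
          fun i => N (Fin.natAdd r i).succ 0))
      refine ⟨M, hM, hdet P Q M N hM (hPQ M (hV hM)).2.1 (hPQ M (hV hM)).2.2.1 (hB M hM) hN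
        ?_ (fun j => hMN (some (Sum.inl j))) (fun i => hMN (some (Sum.inr i)))⟩
      rw [(hPQ M (hV hM)).1]
      have h := hMN none
      rw [Option.casesOn'_none, ha_apply] at h
      simpa using h
    · rintro _ ⟨M, hM, rfl⟩
      exact hB M hM

theorem classification_of_reduced_subspaces_of_R11 {K : Type*} [Field K] {n p : ℕ}
    (hn : 2 ≤ n) (hp : 2 ≤ p) (V : Submodule K (Matrix (Fin n) (Fin p) K))
    (hV : V ≤ Rst K n p 1 1) (hred : Reduced K V) :
    ∃! r : ℕ, r ≤ min (n - 1) (p - 1) ∧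
      Xor' (MatEquiv K V (BlockSpace K n p r (by omega) (by omega)))
        (MatEquiv K V (BlockSpace0 K n p r (by omega) (by omega))) := by
  have hn0 : 0 < n := by omega
  have hp0 : 0 < p := by omega
  have hex : ∃ r, r ≤ n - 1 ∧ r ≤ p - 1 ∧
      (MatEquiv K V (BlockSpace K n p r hn0 hp0) ∨ MatEquiv K V (BlockSpace0 K n p r hn0 hp0)) := by
    obtain ⟨n, rfl⟩ := Nat.exists_eq_add_one_of_ne_zero hn0.ne'
    obtain ⟨p, rfl⟩ := Nat.exists_eq_add_one_of_ne_zero hp0.ne'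
    exact exists_normal_form V hV hred
  have hinv : ∀ r, r ≤ min (n - 1) (p - 1) →
      (MatEquiv K V (BlockSpace K n p r hn0 hp0) ∨ MatEquiv K V (BlockSpace0 K n p r hn0 hp0)) →
      r + Module.finrank K (rankOneSpan V) = Module.finrank K V := by
    rintro r hr (h | h)
    · rw [h.finrank_eq.1, h.finrank_eq.2]
      exact finrank_normal_form hn0 hp0 (by omega) (by omega) _ (Or.inl rfl)
    · rw [h.finrank_eq.1, h.finrank_eq.2]
      exact finrank_normal_form hn0 hp0 (by omega) (by omega) _ (Or.inr rfl)
  obtain ⟨r, hr1, hr2, hr⟩ := hex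
  refine ⟨r, ⟨by omega, ?_⟩, ?_⟩
  · refine (xor_iff_or_and_not_and _ _).2 ⟨hr, fun ⟨h1, h2⟩ => ?_⟩
    exact (finrank_BlockSpace0_lt hn0 hp0).ne (h2.finrank_eq.1.symm.trans h1.finrank_eq.1)
  · rintro r' ⟨hr', hx⟩
    have h1 := hinv r' hr' ((xor_iff_or_and_not_and _ _).1 hx).1
    have h2 := hinv r (by omega) hr
    omega
end

section
/- Let V be a primitive linear subspace of the 3×3 matrices over F2 with upper rank 2. If there exists a nonzero vector x ∈ F2^3 such that the subspace {M x : M ∈ V} of F2^3 has dimension at most 1, then V is equivalent to a linear subspace of J3(F2). -/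
/-!
Choose `x ≠ 0` with `V x` a line `⟨y⟩`. Moving `x` and `y` to the first basis vector turns every
matrix of `V` into a block matrix with first column `(a, 0, 0)` and lower right block `N`, where
the linear form `a` is nonzero because `V` is reduced and `a * det N = 0` because the upper rank
is `2`. Deleting the first row leaves `[0 N]`, so primitivity yields a matrix `B` with `N`
invertible, whence `a = 0` on `B`; take also `A` with `a = 1`.

The blocks of `A` and `A + B` are singular. Normalizing the block of `B` to the identity, the
block of `A` is a rank one idempotent, so it can be normalized to `diag (1, 0)`. Then, for every
matrix of the space, applying `a * det N = 0` to its translates by the span of `A` and `B` gives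
`tr N = a` and `N₀₁ * N₁₀ = 0`. The latter product of two linear forms vanishes, hence so does one
of the forms (`offdiag_dichotomy`), and after possibly swapping the last two coordinates every
matrix is upper triangular, with trace `a + tr N = 2 a = 0`.
-/

open Matrix

/-- The space of `3 × 3` matrices over `F2`. -/
abbrev Mat3 := Matrix (Fin 3) (Fin 3) (ZMod 2)

/-- The linear map `M ↦ P * M * Q`. -/
def sandwich (P Q : Mat3) : Mat3 →ₗ[ZMod 2] Mat3 where
  toFun M := P * M * Q
  map_add' M N := by rw [mul_add, add_mul]
  map_smul' c M := by simp

/-- `S` can be moved into `J3` by an equivalence. -/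
def IntoJ3 (S : Submodule (ZMod 2) Mat3) : Prop :=
  ∃ P Q : Mat3, IsUnit P ∧ IsUnit Q ∧ ∀ M ∈ S, P * M * Q ∈ J3

theorem sandwich_apply (P Q M : Mat3) (i j : Fin 3) : sandwich P Q M i j =
    (P i 0 * M 0 0 + P i 1 * M 1 0 + P i 2 * M 2 0) * Q 0 j +
    (P i 0 * M 0 1 + P i 1 * M 1 1 + P i 2 * M 2 1) * Q 1 j +
    (P i 0 * M 0 2 + P i 1 * M 1 2 + P i 2 * M 2 2) * Q 2 j := by
  change (P * M * Q) i j = _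
  simp only [Matrix.mul_apply, Fin.sum_univ_three]

theorem sandwich_det_eq_zero (P Q : Mat3) {M : Mat3} (h : M.det = 0) :
    (sandwich P Q M).det = 0 := by
  change (P * M * Q).det = 0
  rw [Matrix.det_mul, Matrix.det_mul, h, mul_zero, zero_mul]

theorem matEquiv_map (S : Submodule (ZMod 2) Mat3) {P Q : Mat3} (hP : IsUnit P) (hQ : IsUnit Q) :
    MatEquiv (ZMod 2) S (S.map (sandwich P Q)) :=
  ⟨P, Q, hP, hQ, by rw [Submodule.map_coe]; rfl⟩

theorem IntoJ3.of_map {S : Submodule (ZMod 2) Mat3} {P Q : Mat3} (hP : IsUnit P) (hQ : IsUnit Q)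
    (h : IntoJ3 (S.map (sandwich P Q))) : IntoJ3 S := by
  obtain ⟨P', Q', hP', hQ', h⟩ := h
  refine ⟨P' * P, Q * Q', hP'.mul hP, hQ.mul hQ', fun M hM => ?_⟩
  have := h (P * M * Q) (Submodule.mem_map_of_mem (f := sandwich P Q) hM)
  simpa only [mul_assoc] using this

theorem isUnit_of_det_eq_one {P : Mat3} (h : P.det = 1) : IsUnit P := by
  rw [Matrix.isUnit_iff_isUnit_det, h]
  exact isUnit_one

theorem exists_unit_mulVec_eq (x : Fin 3 → ZMod 2) (hx : x ≠ 0) :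
    ∃ Q : Mat3, IsUnit Q ∧ Q.mulVec ![1, 0, 0] = x := by
  have h0 : ¬ (x 0 = 0 ∧ x 1 = 0 ∧ x 2 = 0) := by
    rintro ⟨h0, h1, h2⟩
    apply hx
    ext i
    fin_cases i <;> assumption
  have hcase : x 0 = 1 ∨ x 1 = 1 ∨ x 2 = 1 := by
    revert h0
    generalize x 0 = a
    generalize x 1 = b
    generalize x 2 = c
    revert a b c
    decide
  -- Complete `x` to a basis by two standard basis vectors.
  rcases hcase with h | h | h
  · refine ⟨!![x 0, 0, 0; x 1, 1, 0; x 2, 0, 1], isUnit_of_det_eq_one ?_, ?_⟩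
    · simp [Matrix.det_fin_three, h]
    · ext i; fin_cases i <;> simp [Matrix.mulVec, dotProduct, Fin.sum_univ_three]
  · refine ⟨!![x 0, 1, 0; x 1, 0, 0; x 2, 0, 1], isUnit_of_det_eq_one ?_, ?_⟩
    · simp [Matrix.det_fin_three, h]
    · ext i; fin_cases i <;> simp [Matrix.mulVec, dotProduct, Fin.sum_univ_three]
  · refine ⟨!![x 0, 1, 0; x 1, 0, 1; x 2, 0, 0], isUnit_of_det_eq_one ?_, ?_⟩
    · simp [Matrix.det_fin_three, h]
    · ext i; fin_cases i <;> simp [Matrix.mulVec, dotProduct, Fin.sum_univ_three]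

theorem offdiag_dichotomy (S : Submodule (ZMod 2) Mat3)
    (h : ∀ M ∈ S, M 1 2 * M 2 1 = 0) : (∀ M ∈ S, M 1 2 = 0) ∨ (∀ M ∈ S, M 2 1 = 0) := by
  by_contra hc
  push Not at hc
  obtain ⟨⟨M, hM, hM'⟩, N, hN, hN'⟩ := hc
  have h1 := h M hM
  have h2 := h N hN
  have h3 := h (M + N) (S.add_mem hM hN)
  simp only [Matrix.add_apply] at h3
  revert h1 h2 h3 hM' hN'
  generalize M 1 2 = a
  generalize M 2 1 = b
  generalize N 1 2 = c
  generalize N 2 1 = d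
  revert a b c d
  decide

theorem det_of_col {M : Mat3} (h1 : M 1 0 = 0) (h2 : M 2 0 = 0) :
    M.det = M 0 0 * (M 1 1 * M 2 2 - M 1 2 * M 2 1) := by
  rw [Matrix.det_fin_three, h1, h2]
  ring

theorem intoJ3_of_lower_zero (S : Submodule (ZMod 2) Mat3)
    (hcol : ∀ M ∈ S, M 1 0 = 0 ∧ M 2 0 = 0) (htr : ∀ M ∈ S, M 0 0 = M 1 1 + M 2 2)
    (hlow : ∀ M ∈ S, M 2 1 = 0) : IntoJ3 S := by
  refine ⟨1, 1, isUnit_one, isUnit_one, fun M hM => ?_⟩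
  rw [one_mul, mul_one]
  refine ⟨?_, ?_⟩
  · rw [Matrix.trace_fin_three, htr M hM]
    generalize M 1 1 = a
    generalize M 2 2 = b
    revert a b
    decide
  · intro i j hij
    have := hcol M hM
    have := hlow M hM
    fin_cases i <;> fin_cases j <;> simp_all

/-- The normalized case: the lower right blocks of `A` and `B` are `diag (1, 0)` and the
identity. -/
theorem intoJ3_of_normalized (S : Submodule (ZMod 2) Mat3)
    (hcol : ∀ M ∈ S, M 1 0 = 0 ∧ M 2 0 = 0) (hdet : ∀ M ∈ S, M.det = 0)
    (A B : Mat3) (hA : A ∈ S) (hB : B ∈ S) (hA0 : A 0 0 = 1) (hA11 : A 1 1 = 1)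
    (hA12 : A 1 2 = 0) (hA21 : A 2 1 = 0) (hA22 : A 2 2 = 0) (hB0 : B 0 0 = 0) (hB11 : B 1 1 = 1)
    (hB12 : B 1 2 = 0) (hB21 : B 2 1 = 0) (hB22 : B 2 2 = 1) : IntoJ3 S := by
  have hd : ∀ M ∈ S, M 0 0 * (M 1 1 * M 2 2 - M 1 2 * M 2 1) = 0 := fun M hM => by
    rw [← det_of_col (hcol M hM).1 (hcol M hM).2, hdet M hM]
  have key : ∀ M ∈ S, M 0 0 = M 1 1 + M 2 2 ∧ M 1 2 * M 2 1 = 0 := by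
    intro M hM
    have h1 := hd M hM
    have h2 := hd _ (S.add_mem hM hB)
    have h3 := hd _ (S.add_mem hM hA)
    have h4 := hd _ (S.add_mem (S.add_mem hM hA) hB)
    simp only [Matrix.add_apply, hA0, hA11, hA12, hA21, hA22, hB0, hB11, hB12, hB21, hB22]
      at h2 h3 h4
    revert h1 h2 h3 h4
    generalize M 0 0 = a
    generalize M 1 1 = p
    generalize M 1 2 = q
    generalize M 2 1 = r
    generalize M 2 2 = s
    revert a p q r s
    decide
  rcases offdiag_dichotomy S fun M hM => (key M hM).2 with h | h
  · -- The blocks are lower triangular: swap the last two coordinates on both sides.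
    have hw : IsUnit (!![1, 0, 0; 0, 0, 1; 0, 1, 0] : Mat3) :=
      isUnit_of_det_eq_one (by decide)
    refine IntoJ3.of_map hw hw (intoJ3_of_lower_zero _ ?_ ?_ ?_)
    all_goals
      rintro _ ⟨M, hM, rfl⟩
      simp [sandwich_apply, hcol M hM, (key M hM).1, h M hM, add_comm]
  · exact intoJ3_of_lower_zero S hcol (fun M hM => (key M hM).1) h

/-- If `N` (entries `b`) is invertible and `E` (entries `a`) and `E + N` are singular, then
`N⁻¹ * E` is a rank one idempotent; the columns of `g` are its eigenvectors for `1` and `0`. With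
determinants equal to `1` in characteristic two, `N⁻¹` and `g⁻¹` are the adjugates, and `p` is
`g⁻¹ * N⁻¹`. -/
theorem exists_normalizing (a11 a12 a21 a22 b11 b12 b21 b22 : ZMod 2)
    (hb : b11 * b22 - b12 * b21 = 1) (ha : a11 * a22 - a12 * a21 = 0)
    (hab : (a11 + b11) * (a22 + b22) - (a12 + b12) * (a21 + b21) = 0) :
    ∃ g11 g12 g21 g22 : ZMod 2, g11 * g22 - g12 * g21 = 1 ∧
      ∃ p11, p11 = g22 * b22 + g12 * b21 ∧ ∃ p12, p12 = g22 * b12 + g12 * b11 ∧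
      ∃ p21, p21 = g21 * b22 + g11 * b21 ∧ ∃ p22, p22 = g21 * b12 + g11 * b11 ∧
      p11 * p22 - p12 * p21 = 1 ∧
      (p11 * a11 + p12 * a21) * g11 + (p11 * a12 + p12 * a22) * g21 = 1 ∧
      (p11 * a11 + p12 * a21) * g12 + (p11 * a12 + p12 * a22) * g22 = 0 ∧
      (p21 * a11 + p22 * a21) * g11 + (p21 * a12 + p22 * a22) * g21 = 0 ∧
      (p21 * a11 + p22 * a21) * g12 + (p21 * a12 + p22 * a22) * g22 = 0 ∧
      (p11 * b11 + p12 * b21) * g11 + (p11 * b12 + p12 * b22) * g21 = 1 ∧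
      (p11 * b11 + p12 * b21) * g12 + (p11 * b12 + p12 * b22) * g22 = 0 ∧
      (p21 * b11 + p22 * b21) * g11 + (p21 * b12 + p22 * b22) * g21 = 0 ∧
      (p21 * b11 + p22 * b21) * g12 + (p21 * b12 + p22 * b22) * g22 = 1 := by
  simp only [exists_eq_left]
  revert a11 a12 a21 a22 b11 b12 b21 b22
  decide

theorem intoJ3_of_col (S : Submodule (ZMod 2) Mat3)
    (hcol : ∀ M ∈ S, M 1 0 = 0 ∧ M 2 0 = 0) (hdet : ∀ M ∈ S, M.det = 0)
    (A B : Mat3) (hA : A ∈ S) (hB : B ∈ S) (hA0 : A 0 0 = 1)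
    (hBN : B 1 1 * B 2 2 - B 1 2 * B 2 1 = 1) : IntoJ3 S := by
  have hd : ∀ M ∈ S, M 0 0 * (M 1 1 * M 2 2 - M 1 2 * M 2 1) = 0 := fun M hM => by
    rw [← det_of_col (hcol M hM).1 (hcol M hM).2, hdet M hM]
  have hB0 : B 0 0 = 0 := by simpa [hBN] using hd B hB
  have h1 := hd A hA
  have h2 := hd _ (S.add_mem hA hB)
  simp only [Matrix.add_apply, hA0, hB0, add_zero, one_mul] at h1 h2
  obtain ⟨g11, g12, g21, g22, hg, p11, -, p12, -, p21, -, p22, -, hp, e1, e2, e3, e4, e5, e6, e7,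
    e8⟩ := exists_normalizing _ _ _ _ _ _ _ _ hBN h1 h2
  have hP : IsUnit (!![1, 0, 0; 0, p11, p12; 0, p21, p22] : Mat3) :=
    isUnit_of_det_eq_one (by simpa [Matrix.det_fin_three] using hp)
  have hQ : IsUnit (!![1, 0, 0; 0, g11, g12; 0, g21, g22] : Mat3) :=
    isUnit_of_det_eq_one (by simpa [Matrix.det_fin_three] using hg)
  refine IntoJ3.of_map hP hQ (intoJ3_of_normalized _ ?_ ?_ _ _
    (Submodule.mem_map_of_mem hA) (Submodule.mem_map_of_mem hB) ?_ ?_ ?_ ?_ ?_ ?_ ?_ ?_ ?_ ?_)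
  · rintro _ ⟨M, hM, rfl⟩
    have := hcol M hM
    simp [sandwich_apply, this]
  · rintro _ ⟨M, hM, rfl⟩
    exact sandwich_det_eq_zero _ _ (hdet M hM)
  all_goals simpa [sandwich_apply]

theorem det_eq_zero_of_urk {V : Submodule (ZMod 2) Mat3} (h : urk V = 2) {M : Mat3}
    (hM : M ∈ V) : M.det = 0 := by
  by_contra hne
  have hr : M.rank = 3 := by
    rw [Matrix.rank_of_isUnit M ((Matrix.isUnit_iff_isUnit_det M).2 (isUnit_iff_ne_zero.2 hne))]
    simp
  have hle : M.rank ≤ urk V := by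
    refine le_csSup ⟨3, ?_⟩ ⟨M, hM, rfl⟩
    rintro _ ⟨N, -, rfl⟩
    simpa using N.rank_le_width
  omega

/-- A `2 × 3` matrix `[0 N]` with `N` singular has rank at most one. -/
theorem rank_le_one_of_block {M : Matrix (Fin 2) (Fin 3) (ZMod 2)} (h0 : M 0 0 = 0)
    (h1 : M 1 0 = 0) (hd : M 0 1 * M 1 2 - M 0 2 * M 1 1 = 0) : M.rank ≤ 1 := by
  have hM : M = !![M 0 1, M 0 2; M 1 1, M 1 2] *
      (!![0, 1, 0; 0, 0, 1] : Matrix (Fin 2) (Fin 3) (ZMod 2)) := by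
    ext i j
    fin_cases i <;> fin_cases j <;> simp [Matrix.mul_apply, h0, h1]
  rw [hM]
  refine (Matrix.rank_mul_le_left _ _).trans ?_
  set N : Matrix (Fin 2) (Fin 2) (ZMod 2) := !![M 0 1, M 0 2; M 1 1, M 1 2] with hN
  by_contra hlt
  have h2 : N.rank ≤ 2 := by simpa using N.rank_le_width
  have h3 : N.rank = 2 := by omega
  have hu : IsUnit N := by
    rw [← Matrix.mulVec_surjective_iff_isUnit]
    have hr : LinearMap.range N.mulVecLin = ⊤ :=
      Submodule.eq_top_of_finrank_eq (by rw [← Matrix.rank, h3]; simp)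
    exact LinearMap.range_eq_top.1 hr
  rw [Matrix.isUnit_iff_isUnit_det, hN, Matrix.det_fin_two_of, hd] at hu
  exact not_isUnit_zero hu

theorem primitive_with_small_image_equiv_subspace_of_J3
    (V : Submodule (ZMod 2) (Matrix (Fin 3) (Fin 3) (ZMod 2)))
    (hprim : Primitive (ZMod 2) V) (hurk : urk V = 2)
    (x : Fin 3 → ZMod 2) (hx : x ≠ 0)
    (hdim : Module.finrank (ZMod 2)
      (Submodule.span (ZMod 2) {y : Fin 3 → ZMod 2 | ∃ M ∈ V, M.mulVec x = y}) ≤ 1) :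
    ∃ W : Submodule (ZMod 2) (Matrix (Fin 3) (Fin 3) (ZMod 2)),
      W ≤ J3 ∧ MatEquiv (ZMod 2) V W := by
  suffices h : IntoJ3 V by
    obtain ⟨P, Q, hP, hQ, h⟩ := h
    refine ⟨V.map (sandwich P Q), ?_, matEquiv_map V hP hQ⟩
    rintro _ ⟨M, hM, rfl⟩
    exact h M hM
  obtain ⟨⟨⟨hred, -⟩, -⟩, hrow⟩ := hprim
  obtain ⟨⟨y, _⟩, hy⟩ := finrank_le_one_iff.1 hdim
  have hline : ∀ M ∈ V, ∃ c : ZMod 2, M.mulVec x = c • y := fun M hM => by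
    obtain ⟨c, hc⟩ := hy ⟨M.mulVec x, Submodule.subset_span ⟨M, hM, rfl⟩⟩
    exact ⟨c, (congrArg Subtype.val hc).symm⟩
  obtain ⟨A, hA, hAx⟩ : ∃ A ∈ V, A.mulVec x ≠ 0 := by
    by_contra hc
    push Not at hc
    exact hx (hred x hc)
  have hy0 : y ≠ 0 := by
    rintro rfl
    obtain ⟨c, hc⟩ := hline A hA
    exact hAx (by rw [hc, smul_zero])
  obtain ⟨Q, hQ, hQx⟩ := exists_unit_mulVec_eq x hx
  obtain ⟨R, hR, hRy⟩ := exists_unit_mulVec_eq y hy0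
  obtain ⟨P, hPR⟩ := hR.exists_left_inv
  have hP : IsUnit P := IsUnit.of_mul_eq_one R hPR
  have hPy : P.mulVec y = ![1, 0, 0] := by
    rw [← hRy, Matrix.mulVec_mulVec, hPR, Matrix.one_mulVec]
  have hfirst : ∀ (N : Mat3) (i : Fin 3), N i 0 = N.mulVec ![1, 0, 0] i := fun N i => by
    simp [Matrix.mulVec, dotProduct, Fin.sum_univ_three]
  have himg : ∀ M : Mat3, (P * M * Q).mulVec ![1, 0, 0] = P.mulVec (M.mulVec x) := fun M => by
    rw [← hQx, Matrix.mulVec_mulVec, Matrix.mulVec_mulVec]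
  have hcolumn : ∀ M ∈ V, ∃ c : ZMod 2, M.mulVec x = c • y ∧
      ∀ i, (P * M * Q) i 0 = (c • ![1, 0, 0] : Fin 3 → ZMod 2) i := fun M hM => by
    obtain ⟨c, hc⟩ := hline M hM
    refine ⟨c, hc, fun i => ?_⟩
    rw [hfirst (P * M * Q) i, himg, hc, Matrix.mulVec_smul, hPy]
  have hcol : ∀ M ∈ V, (P * M * Q) 1 0 = 0 ∧ (P * M * Q) 2 0 = 0 := fun M hM => by
    obtain ⟨c, -, hc⟩ := hcolumn M hM
    constructor <;> rw [hc] <;> simp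
  have hA0 : (P * A * Q) 0 0 = 1 := by
    obtain ⟨c, hc, hc'⟩ := hcolumn A hA
    have hc0 : c ≠ 0 := by
      rintro rfl
      exact hAx (by rw [hc, zero_smul])
    rw [hc', (by decide : ∀ c : ZMod 2, c ≠ 0 → c = 1) c hc0]
    simp
  obtain ⟨B, hB, hBN⟩ : ∃ B ∈ V, (P * B * Q) 1 1 * (P * B * Q) 2 2 -
      (P * B * Q) 1 2 * (P * B * Q) 2 1 ≠ 0 := by
    by_contra hc
    push Not at hc
    -- The cyclic permutation of rows sending the first row to the last place.
    set C : Mat3 := !![0, 1, 0; 0, 0, 1; 1, 0, 0] with hCdef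
    have hC : IsUnit C := isUnit_of_det_eq_one (by decide)
    refine hrow ⟨V.map (sandwich (C * P) Q), matEquiv_map V (hC.mul hP) hQ, ?_⟩
    rintro _ ⟨M, hM, rfl⟩
    have hCM : ∀ N : Mat3, ∀ j, (C * N) 0 j = N 1 j ∧ (C * N) 1 j = N 2 j := fun N j => by
      simp [hCdef, Matrix.mul_apply, Fin.sum_univ_three]
    have h0 : ∀ j, dropRow (sandwich (C * P) Q M) 0 j = (P * M * Q) 1 j := fun j => by
      rw [← (hCM (P * M * Q) j).1, ← mul_assoc, ← mul_assoc]; rfl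
    have h1 : ∀ j, dropRow (sandwich (C * P) Q M) 1 j = (P * M * Q) 2 j := fun j => by
      rw [← (hCM (P * M * Q) j).2, ← mul_assoc, ← mul_assoc]; rfl
    rw [hurk]
    refine rank_le_one_of_block ((h0 0).trans (hcol M hM).1) ((h1 0).trans (hcol M hM).2) ?_
    rw [h0, h0, h1, h1]
    exact hc M hM
  refine IntoJ3.of_map hP hQ (intoJ3_of_col _ ?_ ?_ _ _ (Submodule.mem_map_of_mem hA)
    (Submodule.mem_map_of_mem hB) hA0 ((by decide : ∀ c : ZMod 2, c ≠ 0 → c = 1) _ hBN))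
  · rintro _ ⟨M, hM, rfl⟩
    exact hcol M hM
  · rintro _ ⟨M, hM, rfl⟩
    exact sandwich_det_eq_zero _ _ (det_eq_zero_of_urk hurk hM)
end
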